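/- arXiv:1806.06933 — 6 statements merged into one kernel-verified Lean document; each statement's English description precedes it below -/
import Mathlib

section
/- Let α ∈ (0,1) be the solution of ∫_0^1 dy/(y − y·ln y + 1/α − 1) = 1 (so α ≈ 0.745). For every ε > 0 there exist an integer n and a product distribution of (x,y) on [0,∞)×[0,1] — with x distributed according to some distribution F and y uniform on [0,1], independent of x — such that for every measurable eligible set R ⊆ [0,∞)×[0,1], when the agent draws n i.i.d. samples (x_1,y_1),…,(x_n,y_n) and proposes the eligible sample with maximum y-value (proposing nothing if no sample is eligible), the principal's expected utility is less than (α + ε)·E[max_{1≤i≤n} x_i]. -/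
open MeasureTheory ProbabilityTheory

lemma A4 (q W w : ℝ → ℝ) (m : ℝ) (hm : 0 ≤ m) (hq : Measurable q) (hq0 : ∀ y, 0 ≤ q y)
    (hq1 : ∀ y, q y ≤ 1) (hW : ∀ y, HasDerivAt W (w y) y) (hw : Continuous w) :
    ∫ y in (0:ℝ)..1, Real.exp (-(m * ∫ s in y..1, q s)) * (w y + m * q y * W y)
      = W 1 - Real.exp (-(m * ∫ s in (0:ℝ)..1, q s)) * W 0 := by
  have hloc : LocallyIntegrable q volume := by
    refine (locallyIntegrable_const (1:ℝ)).mono hq.aestronglyMeasurable ?_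
    filter_upwards with y
    rw [Real.norm_of_nonneg (hq0 y)]; simpa using hq1 y
  have hii : ∀ a b, IntervalIntegrable q volume a b := fun a b => intervalIntegrable_iff.mpr
    ((hloc.integrableOn_isCompact isCompact_uIcc).mono_set Set.uIoc_subset_uIcc)
  have hQle : ∀ a b, |∫ s in a..b, q s| ≤ |b - a| := by
    intro a b
    have := intervalIntegral.norm_integral_le_of_norm_le_const (a := a) (b := b) (C := 1) (f := q)
      (fun x _ => by rw [Real.norm_of_nonneg (hq0 x)]; exact hq1 x)
    simpa using this
  have hsub : ∀ x y, (∫ s in x..1, q s) - (∫ s in y..1, q s) = ∫ s in x..y, q s := by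
    intro x y
    have := intervalIntegral.integral_add_adjacent_intervals (hii x y) (hii y 1)
    linarith
  set E : ℝ → ℝ := fun y => Real.exp (-(m * ∫ s in y..1, q s)) with hE
  have hac : AbsolutelyContinuousOnInterval E 0 1 := by
    refine LipschitzOnWith.absolutelyContinuousOnInterval (K := m.toNNReal) ?_
    refine LipschitzOnWith.of_dist_le_mul ?_
    intro x hx y hy
    rw [Set.uIcc_of_le zero_le_one] at hx hy
    have key : ∀ x y : ℝ, x ≤ 1 → y ≤ 1 → E x - E y ≤ m * |x - y| := by
      intro x y hx hy
      have h0 : 0 ≤ ∫ s in x..1, q s := intervalIntegral.integral_nonneg hx (fun u _ => hq0 u)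
      have h1 := hsub x y
      have h2 := abs_le.1 (hQle x y)
      rw [abs_sub_comm] at h2
      have h3 : E x ≤ 1 := by simp only [hE]; rw [Real.exp_le_one_iff]; nlinarith
      have h4 : E y = E x * Real.exp (m * ∫ s in x..y, q s) := by
        simp only [hE]; rw [← Real.exp_add]; congr 1; rw [← hsub x y]; ring
      have h5 := Real.add_one_le_exp (m * ∫ s in x..y, q s)
      have h6 : 0 < E x := Real.exp_pos _
      have h7 : -(m * |x - y|) ≤ m * ∫ s in x..y, q s := by nlinarith
      have h8 : 0 ≤ m * |x - y| := by positivity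
      rw [h4]
      nlinarith
    rw [Real.dist_eq, Real.dist_eq, Real.coe_toNNReal _ hm]
    rw [abs_le]
    constructor
    · have := key y x hy.2 hx.2
      rw [abs_sub_comm] at this
      linarith
    · exact key x y hx.2 hy.2
  have hacW : AbsolutelyContinuousOnInterval W 0 1 := by
    obtain ⟨C, hC⟩ := isCompact_Icc.exists_bound_of_continuousOn (hw.continuousOn (s := Set.Icc (0:ℝ) 1))
    refine LipschitzOnWith.absolutelyContinuousOnInterval (K := C.toNNReal) ?_
    rw [Set.uIcc_of_le zero_le_one]
    refine (convex_Icc (0:ℝ) 1).lipschitzOnWith_of_nnnorm_hasDerivWithin_le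
      (fun x hx => (hW x).hasDerivWithinAt) ?_
    intro x hx
    rw [← NNReal.coe_le_coe]
    exact (hC x hx).trans (Real.le_coe_toNNReal C)
  have := hac.integral_deriv_mul_eq_sub hacW
  have hE1 : E 1 = 1 := by simp [hE]
  rw [hE1, one_mul] at this
  rw [← this]
  apply intervalIntegral.integral_congr_ae
  filter_upwards [_root_.LocallyIntegrable.ae_hasDerivAt_integral hloc] with y hy _
  have h1 : HasDerivAt (fun y => ∫ s in y..1, q s) (-q y) y := by
    have := (hy 1).neg
    refine this.congr_of_eventuallyEq (Filter.Eventually.of_forall fun z => ?_)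
    simp [intervalIntegral.integral_symm z 1]
  have h2 : HasDerivAt E (E y * -(m * -q y)) y := ((h1.const_mul m).neg).exp
  rw [h2.deriv, (hW y).deriv]; ring

lemma q_meas (F : Measure ℝ) [IsProbabilityMeasure F] (R : Set (ℝ × ℝ)) (hR : MeasurableSet R) :
    Measurable fun y => F.real {x | (x, y) ∈ R} := by
  exact (measurable_measure_prodMk_right hR).ennreal_toReal

lemma A3 (F : Measure ℝ) [IsProbabilityMeasure F] (K : ℝ) (hF : ∀ᵐ x ∂F, x ∈ Set.Icc 0 K)
    (W w : ℝ → ℝ) (m : ℝ) (hm : 0 ≤ m) (c : ℝ) (hc : 0 ≤ c)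
    (hW : ∀ y, HasDerivAt W (w y) y) (hw : Continuous w) (hW0 : W 0 = 0)
    (hφ : ∀ y ∈ Set.Ioc (0:ℝ) 1, m * ∫ x, max (x - W y) 0 ∂F ≤ w y + c)
    (R : Set (ℝ × ℝ)) (hR : MeasurableSet R) :
    m * ∫ p, R.indicator (fun p => p.1 *
        Real.exp (-(m * ∫ s in p.2..1, F.real {x | (x, s) ∈ R}))) p
      ∂(F.prod ((volume : Measure ℝ).restrict (Set.Icc (0:ℝ) 1))) ≤ W 1 + c := by
  set q : ℝ → ℝ := fun y => F.real {x | (x, y) ∈ R} with hqdef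
  have hq : Measurable q := q_meas F R hR
  have hq0 : ∀ y, 0 ≤ q y := fun y => measureReal_nonneg
  have hq1 : ∀ y, q y ≤ 1 := fun y => measureReal_le_one
  have hA4 := A4 q W w m hm hq hq0 hq1 hW hw
  rw [hW0, mul_zero, sub_zero] at hA4
  have hloc : LocallyIntegrable q volume := by
    refine (locallyIntegrable_const (1:ℝ)).mono hq.aestronglyMeasurable ?_
    filter_upwards with y
    rw [Real.norm_of_nonneg (hq0 y)]; simpa using hq1 y
  have hii : ∀ a b, IntervalIntegrable q volume a b := fun a b => intervalIntegrable_iff.mpr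
    ((hloc.integrableOn_isCompact isCompact_uIcc).mono_set Set.uIoc_subset_uIcc)
  set E : ℝ → ℝ := fun y => Real.exp (-(m * ∫ s in y..1, q s)) with hE
  have hEc : Continuous E := by
    have h1 : Continuous fun y => ∫ s in (1:ℝ)..y, q s :=
      intervalIntegral.continuous_primitive hii 1
    have h2 : (fun y => ∫ s in y..1, q s) = fun y => -∫ s in (1:ℝ)..y, q s := by
      funext y; rw [intervalIntegral.integral_symm]
    have h3 : Continuous fun y => ∫ s in y..1, q s := by rw [h2]; exact h1.neg
    simp only [hE]; fun_prop
  have hWc : Continuous W := continuous_iff_continuousAt.2 fun y => (hW y).continuousAt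
  have hE0 : ∀ y, 0 < E y := fun y => Real.exp_pos _
  have hE1 : ∀ y ≤ 1, E y ≤ 1 := by
    intro y hy
    simp only [hE]; rw [Real.exp_le_one_iff]
    have := intervalIntegral.integral_nonneg (μ := volume) hy (fun u _ => hq0 u)
    nlinarith
  have hF0 : ∀ᵐ x ∂F, 0 ≤ x := hF.mono fun x h => h.1
  have hFi : Integrable (fun x : ℝ => x) F := by
    refine Integrable.of_bound (C := K) measurable_id.aestronglyMeasurable ?_
    filter_upwards [hF] with x hx
    simpa [abs_of_nonneg hx.1] using hx.2
  -- integrability over the product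
  have hint : Integrable (R.indicator (fun p : ℝ × ℝ => p.1 * E p.2))
      (F.prod ((volume : Measure ℝ).restrict (Set.Icc (0:ℝ) 1))) := by
    refine Integrable.of_bound (C := K) ?_ ?_
    · refine (Measurable.indicator ?_ hR).aestronglyMeasurable
      exact measurable_fst.mul (hEc.measurable.comp measurable_snd)
    · have h1 : ∀ᵐ p ∂(F.prod ((volume : Measure ℝ).restrict (Set.Icc (0:ℝ) 1))),
          p.1 ∈ Set.Icc 0 K := Measure.quasiMeasurePreserving_fst.ae hF
      have h2 : ∀ᵐ p ∂(F.prod ((volume : Measure ℝ).restrict (Set.Icc (0:ℝ) 1))),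
          p.2 ∈ Set.Icc (0:ℝ) 1 := Measure.quasiMeasurePreserving_snd.ae
            (ae_restrict_mem measurableSet_Icc)
      filter_upwards [h1, h2] with p hp1 hp2
      refine (norm_indicator_le_norm_self _ _).trans ?_
      rw [norm_mul, Real.norm_of_nonneg hp1.1, Real.norm_of_nonneg (hE0 _).le]
      have := hE1 _ hp2.2
      nlinarith [hp1.1, hp1.2, hE0 p.2]
  rw [integral_prod_symm _ hint, ← integral_const_mul]
  have hWq : ∀ y ∈ Set.Ioc (0:ℝ) 1,
      m * ∫ x, R.indicator (fun p : ℝ × ℝ => p.1 * E p.2) (x, y) ∂F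
        ≤ E y * (w y + m * q y * W y) + c := by
    intro y hy
    have hRy : MeasurableSet {x | (x, y) ∈ R} := hR.preimage measurable_prodMk_right
    have e1 : ∀ x, R.indicator (fun p : ℝ × ℝ => p.1 * E p.2) (x, y)
        = E y * {x | (x, y) ∈ R}.indicator (fun x => x) x := by
      intro x
      by_cases h : (x, y) ∈ R <;> simp [Set.indicator, h, mul_comm]
    simp_rw [e1]
    rw [integral_const_mul]
    have hpp : Integrable (fun x => max (x - W y) 0) F := (hFi.sub (integrable_const _)).pos_part
    have e2 : ∫ x, {x | (x, y) ∈ R}.indicator (fun x => x) x ∂F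
        ≤ ∫ x, (max (x - W y) 0 + {x | (x, y) ∈ R}.indicator (fun _ => W y) x) ∂F := by
      refine integral_mono (hFi.indicator hRy) ?_ ?_
      · exact hpp.add ((integrable_const _).indicator hRy)
      · intro x
        by_cases h : (x, y) ∈ R
        · simp only [Set.indicator, h, Set.mem_ofPred_eq, if_true]
          have := le_max_left (x - W y) 0; linarith
        · simp [Set.indicator, h]
    rw [integral_add hpp
      ((integrable_const _).indicator hRy), integral_indicator_const _ hRy, smul_eq_mul] at e2
    have e3 := hφ y hy
    have e4 := hE1 y hy.2
    have e5 := hE0 y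
    have e6 : m * ∫ x, {x | (x, y) ∈ R}.indicator (fun x => x) x ∂F
       ≤ w y + c + m * q y * W y := by
      have := mul_le_mul_of_nonneg_left e2 hm
      simp only [hqdef]; nlinarith
    calc _ = E y * (m * ∫ x, {x | (x, y) ∈ R}.indicator (fun x => x) x ∂F) := by ring
      _ ≤ E y * (w y + c + m * q y * W y) := mul_le_mul_of_nonneg_left e6 e5.le
      _ ≤ _ := by nlinarith
  have hI1 : IntegrableOn (fun y => E y * (w y + m * q y * W y)) (Set.Ioc 0 1) volume := by
    have a1 : IntervalIntegrable (fun y => E y * (w y + m * q y * W y)) volume 0 1 := by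
      refine IntervalIntegrable.continuousOn_mul ?_ hEc.continuousOn
      refine (hw.intervalIntegrable _ _).add ?_
      exact ((hii 0 1).const_mul m).mul_continuousOn hWc.continuousOn
    exact (intervalIntegrable_iff_integrableOn_Ioc_of_le zero_le_one).1 a1
  rw [integral_Icc_eq_integral_Ioc]
  have hfin : ∫ y in Set.Ioc (0:ℝ) 1, (E y * (w y + m * q y * W y) + c) = W 1 + c := by
    rw [integral_add hI1 (integrable_const _), ← intervalIntegral.integral_of_le zero_le_one, hA4]
    simp
  rw [← hfin]
  refine integral_mono_of_nonneg ?_ (hI1.add (integrable_const _)) ?_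
  · filter_upwards with y
    refine mul_nonneg hm (integral_nonneg_of_ae ?_)
    filter_upwards [hF0] with x hx
    change 0 ≤ R.indicator (fun p : ℝ × ℝ => p.1 * E p.2) (x, y)
    exact Set.indicator_apply_nonneg fun _ => mul_nonneg hx (hE0 y).le
  · filter_upwards [ae_restrict_mem measurableSet_Ioc] with y hy using hWq y hy

lemma Qeq (F : Measure ℝ) [IsProbabilityMeasure F] (R : Set (ℝ × ℝ)) (hR : MeasurableSet R)
    (y : ℝ) (hy : y ∈ Set.Icc (0:ℝ) 1) :
    (F.prod ((volume : Measure ℝ).restrict (Set.Icc (0:ℝ) 1))).real {s | s ∈ R ∧ y < s.2}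
      = ∫ s in y..1, F.real {x | (x, s) ∈ R} := by
  have hS : MeasurableSet {s : ℝ × ℝ | s ∈ R ∧ y < s.2} :=
    hR.inter (measurableSet_lt measurable_const measurable_snd)
  have hSi : Integrable ({s : ℝ × ℝ | s ∈ R ∧ y < s.2}.indicator (1 : ℝ × ℝ → ℝ))
      (F.prod ((volume : Measure ℝ).restrict (Set.Icc (0:ℝ) 1))) :=
    (integrable_const (1:ℝ)).indicator hS
  rw [← integral_indicator_one hS, integral_prod_symm _ hSi]
  have h : ∀ t, ∫ x, ({s : ℝ × ℝ | s ∈ R ∧ y < s.2}.indicator 1 (x, t) : ℝ) ∂F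
      = (Set.Ioi y).indicator (fun t => F.real {x | (x, t) ∈ R}) t := by
    intro t
    have hRt : MeasurableSet {x | (x, t) ∈ R} := hR.preimage measurable_prodMk_right
    by_cases ht : y < t
    · rw [Set.indicator_of_mem (by exact ht), ← integral_indicator_one hRt]
      congr 1; funext x; by_cases hx : (x, t) ∈ R <;> simp [Set.indicator, ht, hx]
    · rw [Set.indicator_of_notMem (by exact ht)]
      simp [Set.indicator, ht]
  simp_rw [h]
  rw [setIntegral_indicator measurableSet_Ioi, intervalIntegral.integral_of_le hy.2]
  congr 2
  ext t; simp only [Set.mem_inter_iff, Set.mem_Icc, Set.mem_Ioi, Set.mem_Ioc]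
  constructor
  · rintro ⟨⟨a, b⟩, c⟩; exact ⟨c, b⟩
  · rintro ⟨a, b⟩; exact ⟨⟨hy.1.trans a.le, b⟩, a⟩

lemma ae_pi_all {n : ℕ} (μ : Measure (ℝ × ℝ)) [IsProbabilityMeasure μ] (P : ℝ × ℝ → Prop)
    (h : ∀ᵐ p ∂μ, P p) : ∀ᵐ v ∂(Measure.pi fun _ : Fin n => μ), ∀ i, P (v i) := by
  rw [ae_all_iff]
  intro i
  exact (measurePreserving_eval (fun _ : Fin n => μ) i).quasiMeasurePreserving.ae h

lemma A1 (m : ℕ) (μ : Measure (ℝ × ℝ)) [IsProbabilityMeasure μ] (K : ℝ)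
    (hμ : ∀ᵐ p ∂μ, p.1 ∈ Set.Icc 0 K) 
    (R : Set (ℝ × ℝ)) (hR : MeasurableSet R)
    (sel : (Fin (m+1) → ℝ × ℝ) → Option (Fin (m+1)))
    (hsel : ∀ v i, sel v = some i → v i ∈ R ∧ ∀ j, v j ∈ R → (v j).2 ≤ (v i).2) :
    ∫ v, ((sel v).map fun i => (v i).1).getD 0 ∂(Measure.pi fun _ : Fin (m+1) => μ)
      ≤ (m+1) * ∫ p, R.indicator (fun p => p.1 * 
          (1 - μ.real {s | s ∈ R ∧ p.2 < s.2}) ^ m) p ∂μ := by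
  classical
  set B : ℝ × ℝ → ℝ × ℝ → ℝ := fun p s => if s ∈ R ∧ p.2 < s.2 then 0 else 1 with hB
  have hB0 : ∀ p s, 0 ≤ B p s := fun p s => by simp only [hB]; split_ifs <;> norm_num
  have hB1 : ∀ p s, B p s ≤ 1 := fun p s => by simp only [hB]; split_ifs <;> norm_num
  have hBm : Measurable (Function.uncurry B) := by
    refine Measurable.ite ?_ measurable_const measurable_const
    exact (hR.preimage measurable_snd).inter
      (measurableSet_lt (measurable_snd.comp measurable_fst) (measurable_snd.comp measurable_snd))
  set h : (ℝ × ℝ) × (Fin m → ℝ × ℝ) → ℝ := fun z => R.indicator (fun p => p.1) z.1 * ∏ j, B z.1 (z.2 j)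
    with hh
  have hhm : Measurable h := by
    refine ((measurable_fst.indicator hR).comp measurable_fst).mul ?_
    refine Finset.measurable_prod _ fun j _ => ?_
    exact hBm.comp (measurable_fst.prodMk ((measurable_pi_apply j).comp measurable_snd))
  have hP0 : ∀ z : (ℝ × ℝ) × (Fin m → ℝ × ℝ), 0 ≤ ∏ j, B z.1 (z.2 j) :=
    fun z => Finset.prod_nonneg fun j _ => hB0 _ _
  have hP1 : ∀ z : (ℝ × ℝ) × (Fin m → ℝ × ℝ), ∏ j, B z.1 (z.2 j) ≤ 1 :=
    fun z => Finset.prod_le_one (fun j _ => hB0 _ _) fun j _ => hB1 _ _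
  have hhi : Integrable h (μ.prod (Measure.pi fun _ : Fin m => μ)) := by
    refine Integrable.of_bound (C := K) hhm.aestronglyMeasurable ?_
    have := Measure.quasiMeasurePreserving_fst (μ := μ) (ν := Measure.pi fun _ : Fin m => μ) |>.ae hμ
    filter_upwards [this] with z hz
    simp only [hh]
    rw [norm_mul, Real.norm_of_nonneg (hP0 z)]
    have h1 : ‖R.indicator (fun p => p.1) z.1‖ ≤ K := by
      refine (norm_indicator_le_norm_self _ _).trans ?_
      rw [Real.norm_of_nonneg hz.1]; exact hz.2
    nlinarith [hP0 z, hP1 z, norm_nonneg (R.indicator (fun p => p.1) z.1)]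
  have hval : ∫ z, h z ∂(μ.prod (Measure.pi fun _ : Fin m => μ))
      = ∫ p, R.indicator (fun p => p.1 * (1 - μ.real {s | s ∈ R ∧ p.2 < s.2}) ^ m) p ∂μ := by
    rw [integral_prod _ hhi]
    congr 1; funext p
    simp only [hh]
    rw [integral_const_mul, integral_fintype_prod_eq_prod (fun _ => B p)]
    have hS : MeasurableSet {s : ℝ × ℝ | s ∈ R ∧ p.2 < s.2} :=
      hR.inter (measurableSet_lt measurable_const measurable_snd)
    have : ∫ s, B p s ∂μ = 1 - μ.real {s | s ∈ R ∧ p.2 < s.2} := by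
      have e : ∀ s, B p s = 1 - {s : ℝ × ℝ | s ∈ R ∧ p.2 < s.2}.indicator 1 s := by
        intro s; by_cases hs : s ∈ R ∧ p.2 < s.2 <;> simp [hB, Set.indicator, hs]
      have hSi : Integrable ({s : ℝ × ℝ | s ∈ R ∧ p.2 < s.2}.indicator (1 : ℝ × ℝ → ℝ)) μ :=
        (integrable_const (1:ℝ)).indicator hS
      simp_rw [e]
      rw [integral_sub (integrable_const _) hSi,
        integral_indicator_one hS]
      simp
    rw [this]
    by_cases hp : p ∈ R <;> simp [hp]
  have hmp := fun i => measurePreserving_piFinSuccAbove (fun _ : Fin (m+1) => μ) i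
  set T : Fin (m+1) → (Fin (m+1) → ℝ × ℝ) → ℝ := fun i v =>
    h (MeasurableEquiv.piFinSuccAbove (fun _ => ℝ × ℝ) i v) with hT
  have hTi : ∀ i, Integrable (T i) (Measure.pi fun _ : Fin (m+1) => μ) :=
    fun i => (hmp i).integrable_comp_of_integrable hhi
  have hTv : ∀ i, ∫ v, T i v ∂(Measure.pi fun _ : Fin (m+1) => μ)
      = ∫ z, h z ∂(μ.prod (Measure.pi fun _ : Fin m => μ)) :=
    fun i => (hmp i).integral_comp' h
  have hsum : ∫ v, ∑ i, T i v ∂(Measure.pi fun _ : Fin (m+1) => μ)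
     = (m+1) * ∫ p, R.indicator (fun p => p.1 * 
          (1 - μ.real {s | s ∈ R ∧ p.2 < s.2}) ^ m) p ∂μ := by
    rw [integral_finsetSum _ fun i _ => hTi i]
    simp_rw [hTv, hval]
    simp
  rw [← hsum]
  have hae := ae_pi_all (n := m+1) μ _ hμ
  have hT0 : ∀ v : Fin (m+1) → ℝ × ℝ, (∀ i, (v i).1 ∈ Set.Icc 0 K) → ∀ i, 0 ≤ T i v := by
    intro v hv i
    simp only [hT, hh]
    refine mul_nonneg (Set.indicator_apply_nonneg fun _ => ?_) (hP0 _)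
    exact (hv i).1
  refine integral_mono_of_nonneg ?_ (integrable_finsetSum _ fun i _ => hTi i) ?_
  · filter_upwards [hae] with v hv
    rcases hs : sel v with _ | i
    · simp
    · simpa [hs] using (hv i).1
  · filter_upwards [hae] with v hv
    rcases hs : sel v with _ | i
    · simpa [hs] using Finset.sum_nonneg fun i _ => hT0 v hv i
    · have h1 : T i v = (v i).1 := by
        obtain ⟨a, b⟩ := hsel v i hs
        have c1 : (MeasurableEquiv.piFinSuccAbove (fun _ => ℝ × ℝ) i v).1 = v i := rfl
        have c2 : ∀ j, (MeasurableEquiv.piFinSuccAbove (fun _ => ℝ × ℝ) i v).2 j = v (i.succAbove j) :=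
          fun j => rfl
        simp only [hT, hh, c1, c2]
        rw [Set.indicator_of_mem a, Finset.prod_eq_one, mul_one]
        intro j _
        simp only [hB]
        rw [if_neg]
        rintro ⟨d, e⟩
        exact absurd (b _ d) (not_le.2 e)
      simp only [Option.map_some, Option.getD_some]
      rw [← h1]
      exact Finset.single_le_sum (f := fun i => T i v) (fun i _ => hT0 v hv i) (Finset.mem_univ i)


lemma mech_bound (m : ℕ) (hm : 0 < m) (F : Measure ℝ) [IsProbabilityMeasure F] (K : ℝ)
    (hF : ∀ᵐ x ∂F, x ∈ Set.Icc 0 K)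
    (W w : ℝ → ℝ) (c : ℝ) (hc : 0 ≤ c)
    (hW : ∀ y, HasDerivAt W (w y) y) (hw : Continuous w) (hW0 : W 0 = 0)
    (hφ : ∀ y ∈ Set.Ioc (0:ℝ) 1, m * ∫ x, max (x - W y) 0 ∂F ≤ w y + c)
    (R : Set (ℝ × ℝ)) (hR : MeasurableSet R)
    (sel : (Fin (m+1) → ℝ × ℝ) → Option (Fin (m+1)))
    (hsel : ∀ v i, sel v = some i → v i ∈ R ∧ ∀ j, v j ∈ R → (v j).2 ≤ (v i).2) :
    ∫ v, ((sel v).map fun i => (v i).1).getD 0 ∂(Measure.pi fun _ : Fin (m+1) =>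
        F.prod ((volume : Measure ℝ).restrict (Set.Icc (0:ℝ) 1)))
      ≤ (m+1) / m * (W 1 + c) := by
  have hP : IsProbabilityMeasure ((volume : Measure ℝ).restrict (Set.Icc (0:ℝ) 1)) :=
    ⟨by simp⟩
  set μ := F.prod ((volume : Measure ℝ).restrict (Set.Icc (0:ℝ) 1)) with hμdef
  have hm' : (0:ℝ) < m := by exact_mod_cast hm
  have h1 : ∀ᵐ p ∂μ, p.1 ∈ Set.Icc 0 K := Measure.quasiMeasurePreserving_fst.ae hF
  have h2 : ∀ᵐ p ∂μ, p.2 ∈ Set.Icc (0:ℝ) 1 := Measure.quasiMeasurePreserving_snd.ae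
            (ae_restrict_mem measurableSet_Icc)
  refine (A1 m μ K h1 R hR sel hsel).trans ?_
  have h3 := A3 F K hF W w m hm'.le c hc hW hw hW0 hφ R hR
  rw [← hμdef] at h3
  set q : ℝ → ℝ := fun y => F.real {x | (x, y) ∈ R} with hqdef
  have hq : Measurable q := q_meas F R hR
  have hq0 : ∀ y, 0 ≤ q y := fun y => measureReal_nonneg
  have hq1 : ∀ y, q y ≤ 1 := fun y => measureReal_le_one
  have hloc : LocallyIntegrable q volume := by
    refine (locallyIntegrable_const (1:ℝ)).mono hq.aestronglyMeasurable ?_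
    filter_upwards with y
    rw [Real.norm_of_nonneg (hq0 y)]; simpa using hq1 y
  have hii : ∀ a b, IntervalIntegrable q volume a b := fun a b => intervalIntegrable_iff.mpr
    ((hloc.integrableOn_isCompact isCompact_uIcc).mono_set Set.uIoc_subset_uIcc)
  set E : ℝ → ℝ := fun y => Real.exp (-(m * ∫ s in y..1, q s)) with hE
  have hEc : Continuous E := by
    have h1 : Continuous fun y => ∫ s in (1:ℝ)..y, q s :=
      intervalIntegral.continuous_primitive hii 1
    have h2 : (fun y => ∫ s in y..1, q s) = fun y => -∫ s in (1:ℝ)..y, q s := by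
      funext y; rw [intervalIntegral.integral_symm]
    have h3 : Continuous fun y => ∫ s in y..1, q s := by rw [h2]; exact h1.neg
    simp only [hE]; fun_prop
  have hE0 : ∀ y, 0 < E y := fun y => Real.exp_pos _
  have hE1 : ∀ y ≤ 1, E y ≤ 1 := by
    intro y hy
    simp only [hE]; rw [Real.exp_le_one_iff]
    have := intervalIntegral.integral_nonneg (μ := volume) hy (fun u _ => hq0 u)
    nlinarith
  have h4 : ∫ p, R.indicator (fun p => p.1 * (1 - μ.real {s | s ∈ R ∧ p.2 < s.2}) ^ m) p ∂μ
      ≤ ∫ p, R.indicator (fun p => p.1 * E p.2) p ∂μ := by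
    refine integral_mono_of_nonneg ?_ ?_ ?_
    · filter_upwards [h1] with p hp
      refine Set.indicator_apply_nonneg fun _ => mul_nonneg hp.1 (pow_nonneg ?_ _)
      have : μ.real {s | s ∈ R ∧ p.2 < s.2} ≤ 1 := measureReal_le_one
      linarith
    · refine Integrable.of_bound (C := K) ?_ ?_
      · refine (Measurable.indicator ?_ hR).aestronglyMeasurable
        exact measurable_fst.mul (hEc.measurable.comp measurable_snd)
      · filter_upwards [h1, h2] with p hp1 hp2
        refine (norm_indicator_le_norm_self _ _).trans ?_
        rw [norm_mul, Real.norm_of_nonneg hp1.1, Real.norm_of_nonneg (hE0 _).le]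
        have := hE1 _ hp2.2
        nlinarith [hp1.1, hp1.2, hE0 p.2]
    · filter_upwards [h1, h2] with p hp1 hp2
      by_cases hp : p ∈ R
      · rw [Set.indicator_of_mem hp, Set.indicator_of_mem hp]
        refine mul_le_mul_of_nonneg_left ?_ hp1.1
        have e1 : μ.real {s | s ∈ R ∧ p.2 < s.2} ≤ 1 := measureReal_le_one
        have e2 := Qeq F R hR p.2 hp2
        rw [← hμdef] at e2
        have e3 := Real.one_sub_le_exp_neg (μ.real {s | s ∈ R ∧ p.2 < s.2})
        calc _ ≤ (Real.exp (-(μ.real {s | s ∈ R ∧ p.2 < s.2}))) ^ m :=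
              pow_le_pow_left₀ (by linarith) e3 m
          _ = E p.2 := by
              rw [← Real.exp_nat_mul, e2]; simp only [hE, hqdef]; congr 1; ring
      · simp [hp]
  have h5 : ∫ p, R.indicator (fun p => p.1 * E p.2) p ∂μ ≤ (W 1 + c) / m := by
    rw [le_div_iff₀ hm', mul_comm]; exact h3
  calc _ ≤ ((m:ℝ)+1) * ((W 1 + c) / m) :=
        mul_le_mul_of_nonneg_left (h4.trans h5) (by positivity)
    _ = _ := by ring
lemma sup_formula (m : ℕ) (F : Measure ℝ) [IsProbabilityMeasure F] (K : ℝ)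
    (hF : ∀ᵐ x ∂F, x ∈ Set.Icc 0 K) :
    ∫ v, (⨆ i, (v i).1) ∂(Measure.pi fun _ : Fin (m+1) =>
        F.prod ((volume : Measure ℝ).restrict (Set.Icc (0:ℝ) 1)))
      = ∫ x in Set.Ioc 0 K, (1 - F.real (Set.Iio x) ^ (m+1)) := by
  have hP : IsProbabilityMeasure ((volume : Measure ℝ).restrict (Set.Icc (0:ℝ) 1)) :=
    ⟨by simp⟩
  set μ := F.prod ((volume : Measure ℝ).restrict (Set.Icc (0:ℝ) 1)) with hμdef
  have h1 : ∀ᵐ p ∂μ, p.1 ∈ Set.Icc 0 K := Measure.quasiMeasurePreserving_fst.ae hF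
  have hae := ae_pi_all (n := m+1) μ _ h1
  have hmeas : Measurable fun v : Fin (m+1) → ℝ × ℝ => ⨆ i, (v i).1 :=
    Measurable.iSup fun i => measurable_fst.comp (measurable_pi_apply i)
  have h0 : ∀ᵐ v ∂(Measure.pi fun _ : Fin (m+1) => μ), 0 ≤ ⨆ i, (v i).1 := by
    filter_upwards [hae] with v hv
    exact (hv 0).1.trans (le_ciSup (f := fun i => (v i).1) (Set.finite_range _).bddAbove 0)
  have hK : ∀ᵐ v ∂(Measure.pi fun _ : Fin (m+1) => μ), ⨆ i, (v i).1 ≤ K := by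
    filter_upwards [hae] with v hv
    exact ciSup_le fun i => (hv i).2
  have hint : Integrable (fun v : Fin (m+1) → ℝ × ℝ => ⨆ i, (v i).1)
      (Measure.pi fun _ : Fin (m+1) => μ) := by
    refine Integrable.of_bound (C := K) hmeas.aestronglyMeasurable ?_
    filter_upwards [h0, hK] with v a b
    rw [Real.norm_of_nonneg a]; exact b
  rw [hint.integral_eq_integral_Ioc_meas_le h0 hK]
  congr 1; funext x
  have hs : {v : Fin (m+1) → ℝ × ℝ | x ≤ ⨆ i, (v i).1}
      = (Set.univ.pi fun _ : Fin (m+1) => (Set.Iio x) ×ˢ (Set.univ : Set ℝ))ᶜ := by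
    ext v
    have : (⨆ i, (v i).1) < x ↔ ∀ i, (v i).1 < x := by
      constructor
      · intro h i
        exact (le_ciSup (f := fun i => (v i).1) (Set.finite_range _).bddAbove i).trans_lt h
      · intro h
        obtain ⟨i, hi⟩ := exists_eq_ciSup_of_finite (f := fun i => (v i).1)
        rw [← hi]; exact h i
    rw [Set.mem_compl_iff, Set.mem_univ_pi]
    simp only [Set.mem_prod, Set.mem_Iio, Set.mem_univ, and_true]
    rw [← this, not_lt]; rfl
  have hms : MeasurableSet (Set.univ.pi fun _ : Fin (m+1) => (Set.Iio x) ×ˢ (Set.univ : Set ℝ)) :=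
    MeasurableSet.univ_pi fun _ => measurableSet_Iio.prod MeasurableSet.univ
  rw [hs, probReal_compl_eq_one_sub hms]
  congr 1
  rw [measureReal_def, Measure.pi_pi]
  simp [hμdef, Measure.prod_prod, measureReal_def]

lemma sup_lower (m : ℕ) (F : Measure ℝ) [IsProbabilityMeasure F] (K : ℝ)
    (hF : ∀ᵐ x ∂F, x ∈ Set.Icc 0 K) (v g : ℝ → ℝ) (hv : ∀ u, HasDerivAt v (g u) u)
    (hg : Continuous g) (hg0 : ∀ u, 0 < g u) (hv0 : v 0 = 0) (hK : v 1 ≤ K) (δ κ : ℝ)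
    (h1 : ∀ u ∈ Set.Ioc (0:ℝ) 1, 1 - u - δ ≤ 1 - F.real (Set.Iio (v u)) ^ (m+1))
    (h2 : ∀ x ∈ Set.Ioc (v 1) K, κ ≤ 1 - F.real (Set.Iio x) ^ (m+1)) :
    (∫ u in (0:ℝ)..1, (1 - u - δ) * g u) + (K - v 1) * κ ≤
    ∫ v, (⨆ i, (v i).1) ∂(Measure.pi fun _ : Fin (m+1) =>
        F.prod ((volume : Measure ℝ).restrict (Set.Icc (0:ℝ) 1))) := by
  rw [sup_formula m F K hF]
  set H : ℝ → ℝ := fun x => 1 - F.real (Set.Iio x) ^ (m+1) with hH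
  have hmono : Monotone fun x => F.real (Set.Iio x) := fun x y h =>
    measureReal_mono (Set.Iio_subset_Iio h)
  have hHm : Measurable H := measurable_const.sub (hmono.measurable.pow_const _)
  have hvm : StrictMono v := strictMono_of_hasDerivAt_pos hv hg0
  have hvc : Continuous v := continuous_iff_continuousAt.2 fun y => (hv y).continuousAt
  have hV0 : 0 ≤ v 1 := by rw [← hv0]; exact hvm.monotone zero_le_one
  have hb : ∀ x, ‖H x‖ ≤ 1 := by
    intro x
    have a0 : 0 ≤ F.real (Set.Iio x) := measureReal_nonneg
    have a1 : F.real (Set.Iio x) ≤ 1 := measureReal_le_one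
    have a2 := pow_le_one₀ (n := m+1) a0 a1
    have a3 := pow_nonneg a0 (m+1)
    rw [Real.norm_eq_abs, abs_le]; simp only [hH]; constructor <;> linarith
  have hHi : ∀ a b, IntegrableOn H (Set.Ioc a b) volume := fun a b =>
    Integrable.of_bound (C := 1) hHm.aestronglyMeasurable (Filter.Eventually.of_forall hb)
  rw [← Set.Ioc_union_Ioc_eq_Ioc hV0 hK, setIntegral_union (Set.Ioc_disjoint_Ioc_of_le le_rfl)
    measurableSet_Ioc (hHi _ _) (hHi _ _)]
  refine add_le_add ?_ ?_
  · have him : v '' Set.Ioc 0 1 = Set.Ioc 0 (v 1) := by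
      ext x; constructor
      · rintro ⟨u, hu, rfl⟩
        exact ⟨by rw [← hv0]; exact hvm hu.1, hvm.monotone hu.2⟩
      · intro hx
        obtain ⟨u, hu, rfl⟩ := intermediate_value_Icc zero_le_one hvc.continuousOn
          (show x ∈ Set.Icc (v 0) (v 1) from ⟨by rw [hv0]; exact hx.1.le, hx.2⟩)
        refine ⟨u, ⟨?_, hu.2⟩, rfl⟩
        have := hx.1
        rw [← hv0] at this
        exact hvm.lt_iff_lt.1 this
    rw [← him, integral_image_eq_integral_abs_deriv_smul measurableSet_Ioc
      (fun x _ => (hv x).hasDerivWithinAt) hvm.injective.injOn,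
      intervalIntegral.integral_of_le zero_le_one]
    have hgi : IntegrableOn g (Set.Ioc 0 1) volume :=
      (intervalIntegrable_iff_integrableOn_Ioc_of_le zero_le_one).1 (hg.intervalIntegrable 0 1)
    refine setIntegral_mono_on ?_ ?_ measurableSet_Ioc ?_
    · refine (intervalIntegrable_iff_integrableOn_Ioc_of_le zero_le_one).1 
        (Continuous.intervalIntegrable ?_ 0 1)
      fun_prop
    · have : IntegrableOn (fun x => H (v x) * g x) (Set.Ioc 0 1) volume := by
        refine Integrable.bdd_mul (c := 1) hgi ?_ ?_
        · exact (hHm.comp hvc.measurable).aestronglyMeasurable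
        · exact Filter.Eventually.of_forall fun x => hb _
      refine this.congr_fun (fun x _ => ?_) measurableSet_Ioc
      simp [abs_of_pos (hg0 x), mul_comm]
    · intro u hu
      rw [abs_of_pos (hg0 u), smul_eq_mul, mul_comm (g u)]
      exact mul_le_mul_of_nonneg_right (h1 u hu) (hg0 u).le
  · have : ∫ x in Set.Ioc (v 1) K, κ = (K - v 1) * κ := by
      simp [measureReal_def, Real.volume_Ioc, ENNReal.toReal_ofReal (sub_nonneg.2 hK)]
    rw [← this]
    exact setIntegral_mono_on (integrable_const _) (hHi _ _) measurableSet_Ioc h2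
/-- The clipped denominator. -/
noncomputable def Dc (b s : ℝ) : ℝ := b + max 0 (min s 1) + Real.negMulLog (max 0 (min s 1))

lemma Dc_cont (b : ℝ) : Continuous (Dc b) := by
  have : Continuous fun s : ℝ => max 0 (min s 1) := by fun_prop
  exact (continuous_const.add this).add (Real.continuous_negMulLog.comp this)

lemma Dc_eq (b s : ℝ) (h0 : 0 ≤ s) (h1 : s ≤ 1) : Dc b s = b + s - s * Real.log s := by
  simp [Dc, min_eq_left h1, max_eq_right h0, Real.negMulLog]; ring

lemma Dc_ge (b s : ℝ) : b ≤ Dc b s := by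
  have h0 : 0 ≤ max 0 (min s 1) := le_max_left _ _
  have h1 : max 0 (min s 1) ≤ 1 := max_le zero_le_one (min_le_right _ _)
  have := Real.negMulLog_nonneg h0 h1
  unfold Dc; linarith

lemma Dc_le (b s : ℝ) : Dc b s ≤ b + 1 := by
  have h0 : 0 ≤ max 0 (min s 1) := le_max_left _ _
  have := Real.negMulLog_le_one_sub_self h0
  unfold Dc; linarith

lemma Dc_deriv (b s : ℝ) (h0 : 0 < s) (h1 : s < 1) : HasDerivAt (Dc b) (-Real.log s) s := by
  have h : HasDerivAt (fun s => b + s + Real.negMulLog s) (0 + 1 + (-Real.log s - 1)) s :=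
    ((hasDerivAt_const s b).add (hasDerivAt_id s)).add (Real.hasDerivAt_negMulLog h0.ne')
  have e : (0:ℝ) + 1 + (-Real.log s - 1) = -Real.log s := by ring
  rw [e] at h
  refine h.congr_of_eventuallyEq ?_
  filter_upwards [Ioo_mem_nhds h0 h1] with t ht
  simp [Dc, min_eq_left ht.2.le, max_eq_right ht.1.le]

lemma analytic (b : ℝ) (hb : 0 < b)
    (hI : ∫ u in (0:ℝ)..1, (u - u * Real.log u + b)⁻¹ = 1) :
    ∃ v g W w : ℝ → ℝ, v 0 = 0 ∧ (∀ u, HasDerivAt v (g u) u) ∧ Continuous g ∧ (∀ u, 0 < g u) ∧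
      W 0 = 0 ∧ W 1 = v 1 ∧ (∀ y, HasDerivAt W (w y) y) ∧ Continuous w ∧
      (∀ y ∈ Set.Ioc (0:ℝ) 1, ∃ a ∈ Set.Ioc (0:ℝ) 1, W y = v a ∧ 
        ∫ t in (0:ℝ)..(-Real.log a), (v (Real.exp (-t)) - v a) = w y - 1 / (b + 1)) ∧
      ∫ u in (0:ℝ)..1, (b + u) * g u = 1 / (b + 1) := by
  have hDpos : ∀ s, 0 < Dc b s := fun s => hb.trans_le (Dc_ge b s)
  have hDc := Dc_cont b
  have hic : Continuous fun s => (Dc b s)⁻¹ := hDc.inv₀ fun s => (hDpos s).ne'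
  set T : ℝ → ℝ := fun s => ∫ u in (0:ℝ)..s, (Dc b u)⁻¹ with hT
  set v : ℝ → ℝ := fun s => ∫ u in (0:ℝ)..s, (Dc b u)⁻¹ ^ 2 with hv
  have hTd : ∀ s, HasDerivAt T ((Dc b s)⁻¹) s := fun s => hic.integral_hasStrictDerivAt 0 s |>.hasDerivAt
  have hvd : ∀ s, HasDerivAt v ((Dc b s)⁻¹ ^ 2) s := fun s =>
    (hic.pow 2).integral_hasStrictDerivAt 0 s |>.hasDerivAt
  have hvc : Continuous v := continuous_iff_continuousAt.2 fun y => (hvd y).continuousAt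
  have hTc : Continuous T := continuous_iff_continuousAt.2 fun y => (hTd y).continuousAt
  have hTm : StrictMono T := strictMono_of_hasDerivAt_pos hTd fun s => inv_pos.2 (hDpos s)
  have hT0 : T 0 = 0 := by simp [hT]
  have hT1 : T 1 = 1 := by
    refine Eq.trans ?_ hI
    refine intervalIntegral.integral_congr fun u hu => ?_
    rw [Set.uIcc_of_le zero_le_one] at hu
    change (Dc b u)⁻¹ = _
    rw [Dc_eq b u hu.1 hu.2]; congr 1; ring
  have hgrow : ∀ x y, x ≤ y → (b+1)⁻¹ * (y - x) ≤ T y - T x := by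
    intro x y hxy
    have : T y - T x = ∫ u in x..y, (Dc b u)⁻¹ :=
      intervalIntegral.integral_interval_sub_left (hic.intervalIntegrable _ _) (hic.intervalIntegrable _ _)
    rw [this]
    have h2 : ∫ u in x..y, (b+1)⁻¹ = (b+1)⁻¹ * (y - x) := by simp [mul_comm]
    rw [← h2]
    refine intervalIntegral.integral_mono_on hxy (by simp) (hic.intervalIntegrable _ _) fun u _ => ?_
    exact inv_anti₀ (hDpos u) (Dc_le b u)
  have hb1 : 0 < (b+1)⁻¹ := by positivity
  have hTs : Function.Surjective T := by
    refine hTc.surjective ?_ ?_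
    · refine Filter.tendsto_atTop_mono' _ ?_ (Filter.tendsto_id.const_mul_atTop hb1)
      filter_upwards [Filter.eventually_ge_atTop 0] with x hx
      have := hgrow 0 x hx
      rw [hT0] at this; simp only [id]; linarith
    · refine Filter.tendsto_atBot_mono' _ ?_ (Filter.tendsto_id.const_mul_atBot hb1)
      filter_upwards [Filter.eventually_le_atBot 0] with x hx
      have := hgrow x 0 hx
      rw [hT0] at this; simp only [id]; linarith
  let e := hTm.orderIsoOfSurjective T hTs
  have heT : ∀ x, e x = T x := fun x => rfl
  have hs1 : ∀ x, e.symm (T x) = x := fun x => by rw [← heT]; simp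
  have hs2 : ∀ y, T (e.symm y) = y := fun y => by rw [← heT]; simp
  have hsc : Continuous e.symm := e.symm.continuous
  have hsd : ∀ y, HasDerivAt e.symm (Dc b (e.symm y)) y := by
    intro y
    have := HasDerivAt.of_local_left_inverse (f := T) (g := e.symm) (a := y) hsc.continuousAt
      (hTd (e.symm y)) (inv_ne_zero (hDpos _).ne') (Filter.Eventually.of_forall hs2)
    rwa [inv_inv] at this
  have he0 : e.symm 0 = 0 := by
    have := hs1 0
    rwa [hT0] at this
  have he1 : e.symm 1 = 1 := by
    have := hs1 1
    rwa [hT1] at this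
  refine ⟨v, fun s => (Dc b s)⁻¹ ^ 2, fun y => v (e.symm y), fun y => (Dc b (e.symm y))⁻¹,
    by simp [hv], hvd, hic.pow 2, fun u => pow_pos (inv_pos.2 (hDpos u)) 2, ?_, ?_, ?_, ?_, ?_, ?_⟩
  · simp [he0, hv]
  · simp only [he1]
  · intro y
    have := (hvd (e.symm y)).comp y (hsd y)
    refine this.congr_deriv ?_
    have := (hDpos (e.symm y)).ne'
    rw [pow_two, mul_assoc, inv_mul_cancel₀ this, mul_one]
  · exact hic.comp hsc
  · intro y hy
    have ha0 : 0 < e.symm y := by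
      have := e.symm.strictMono hy.1; rwa [he0] at this
    have ha1 : e.symm y ≤ 1 := by
      have := e.symm.monotone hy.2; rwa [he1] at this
    refine ⟨e.symm y, ⟨ha0, ha1⟩, rfl, ?_⟩
    simp only []
    generalize e.symm y = a at ha0 ha1 ⊢
    have hL : 0 ≤ -Real.log a := by have := Real.log_nonpos ha0.le ha1; linarith
    have hexp : ∀ t : ℝ, HasDerivAt (fun t => Real.exp (-t)) (-Real.exp (-t)) t := by
      intro t
      have := (hasDerivAt_neg t).exp
      convert this using 1; ring
    have := intervalIntegral.integral_eq_sub_of_hasDerivAt_of_le (a := 0) (b := -Real.log a)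
      (f := fun t => t * (v (Real.exp (-t)) - v a) + (Dc b (Real.exp (-t)))⁻¹)
      (f' := fun t => v (Real.exp (-t)) - v a) hL ?_ ?_ ?_
    · rw [this]
      have e1 : Dc b 1 = b + 1 := by rw [Dc_eq b 1 zero_le_one le_rfl]; simp
      simp [Real.exp_log ha0, e1]
    · apply Continuous.continuousOn
      have : Continuous fun t : ℝ => Real.exp (-t) := by fun_prop
      exact (continuous_id.mul ((hvc.comp this).sub continuous_const)).add (hic.comp this)
    · intro t ht
      have h1 := ((hvd (Real.exp (-t))).comp t (hexp t)).sub_const (v a)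
      have h2 := (hasDerivAt_id t).mul h1
      have hlt : Real.exp (-t) < 1 := by rw [Real.exp_lt_one_iff]; linarith [ht.1]
      have h3 := ((Dc_deriv b _ (Real.exp_pos (-t)) hlt).comp t (hexp t)).fun_inv
        (hDpos (Real.exp (-t))).ne'
      have h4 := h2.add h3
      rw [Real.log_exp] at h4
      refine h4.congr_deriv ?_
      have := (hDpos (Real.exp (-t))).ne'
      simp only [Function.comp, id]
      field_simp
      ring
    · apply Continuous.intervalIntegrable
      have : Continuous fun t : ℝ => Real.exp (-t) := by fun_prop
      exact (hvc.comp this).sub continuous_const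
  · have := intervalIntegral.integral_eq_sub_of_hasDerivAt_of_le (a := 0) (b := 1)
      (f := fun u => u * (Dc b u)⁻¹) (f' := fun u => (b + u) * (Dc b u)⁻¹ ^ 2) zero_le_one ?_ ?_ ?_
    · rw [this]
      have e1 : Dc b 1 = b + 1 := by rw [Dc_eq b 1 zero_le_one le_rfl]; simp
      simp [e1]
    · exact (continuous_id.mul hic).continuousOn
    · intro u hu
      have h := (hasDerivAt_id u).mul ((Dc_deriv b u hu.1 hu.2).fun_inv (hDpos u).ne')
      refine h.congr_deriv ?_
      have h5 := (hDpos u).ne'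
      have h6 := Dc_eq b u hu.1.le hu.2.le
      simp only [id]
      field_simp
      rw [h6]; ring
    · exact ((continuous_const.add continuous_id).mul (hic.pow 2)).intervalIntegrable _ _
/-- The hard distribution. -/
noncomputable def hardF (ξ : ℝ → ℝ) (L κ K m : ℝ) : Measure ℝ :=
  ENNReal.ofReal (1 / m) • (((volume : Measure ℝ).restrict (Set.Icc 0 L)).map ξ)
    + (ENNReal.ofReal (κ / m) • Measure.dirac K
    + ENNReal.ofReal (1 - (L + κ) / m) • Measure.dirac 0)

lemma hardF_prob (ξ : ℝ → ℝ) (hξ : Measurable ξ) (L κ K m : ℝ) (hL : 0 ≤ L) (hκ : 0 ≤ κ)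
    (hm : 0 < m) (hmass : L + κ ≤ m) : IsProbabilityMeasure (hardF ξ L κ K m) := by
  constructor
  have h3 : 0 ≤ 1 - (L + κ) / m := by
    rw [sub_nonneg, div_le_one hm]; exact hmass
  simp only [hardF, Measure.add_apply, Measure.smul_apply, smul_eq_mul,
    Measure.map_apply hξ MeasurableSet.univ, Set.preimage_univ, measure_univ, mul_one,
    Measure.restrict_apply_univ, Real.volume_Icc, sub_zero]
  rw [← ENNReal.ofReal_mul (by positivity), ← ENNReal.ofReal_add (by positivity) h3,
    ← ENNReal.ofReal_add (by positivity) (by positivity)]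
  rw [← ENNReal.ofReal_one]
  congr 1
  field_simp; ring

lemma hardF_ae (ξ : ℝ → ℝ) (hξ : Measurable ξ) (L κ K m : ℝ) (hK : 0 ≤ K)
    (hξK : ∀ t ∈ Set.Icc 0 L, ξ t ∈ Set.Icc 0 K) :
    ∀ᵐ x ∂(hardF ξ L κ K m), x ∈ Set.Icc 0 K := by
  unfold hardF
  rw [ae_add_measure_iff, ae_add_measure_iff]
  refine ⟨Measure.ae_smul_measure ?_ _, Measure.ae_smul_measure ?_ _, Measure.ae_smul_measure ?_ _⟩
  · refine (ae_map_iff hξ.aemeasurable (p := fun x => x ∈ Set.Icc 0 K) measurableSet_Icc).2 ?_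
    filter_upwards [ae_restrict_mem measurableSet_Icc] with t ht using hξK t ht
  · refine (ae_dirac_iff (p := fun x => x ∈ Set.Icc 0 K) measurableSet_Icc).2 ?_; exact ⟨hK, le_rfl⟩
  · refine (ae_dirac_iff (p := fun x => x ∈ Set.Icc 0 K) measurableSet_Icc).2 ?_; exact ⟨le_rfl, hK⟩

lemma hardF_integral (ξ : ℝ → ℝ) (hξ : Continuous ξ) (L κ K m : ℝ) (hκ : 0 ≤ κ)
    (hm : 0 < m) (hmass : L + κ ≤ m) (f : ℝ → ℝ) (hf : Continuous f) :
    ∫ x, f x ∂(hardF ξ L κ K m) = 1 / m * (∫ t in Set.Icc 0 L, f (ξ t)) + (κ / m * f K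
      + (1 - (L + κ) / m) * f 0) := by
  have h3 : 0 ≤ 1 - (L + κ) / m := by
    rw [sub_nonneg, div_le_one hm]; exact hmass
  have i1 : Integrable f (((volume : Measure ℝ).restrict (Set.Icc 0 L)).map ξ) := by
    rw [integrable_map_measure hf.aestronglyMeasurable hξ.measurable.aemeasurable]
    exact (hf.comp hξ).continuousOn.integrableOn_Icc
  have i2 : ∀ a, Integrable f (Measure.dirac a) := fun a =>
    integrable_dirac (by simp)
  unfold hardF
  rw [integral_add_measure (i1.smul_measure ENNReal.ofReal_ne_top)
      (((i2 K).smul_measure ENNReal.ofReal_ne_top).add_measure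
        ((i2 0).smul_measure ENNReal.ofReal_ne_top)),
    integral_add_measure ((i2 K).smul_measure ENNReal.ofReal_ne_top)
        ((i2 0).smul_measure ENNReal.ofReal_ne_top)]
  simp only [integral_smul_measure, integral_dirac, smul_eq_mul]
  rw [integral_map hξ.measurable.aemeasurable hf.aestronglyMeasurable,
    ENNReal.toReal_ofReal (by positivity), ENNReal.toReal_ofReal (by positivity),
    ENNReal.toReal_ofReal h3]

lemma hardF_Iio (ξ : ℝ → ℝ) (hξ : Measurable ξ) (L κ K m x a : ℝ) (hL : 0 ≤ L) (hκ : 0 ≤ κ)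
    (hm : 0 < m) (hmass : L + κ ≤ m) (hx : x ≤ K) (ha0 : 0 ≤ a) (haL : a ≤ L)
    (ha : ∀ t ∈ Set.Ico 0 a, x ≤ ξ t) :
    (hardF ξ L κ K m).real (Set.Iio x) ≤ 1 - (a + κ) / m := by
  have hP := hardF_prob ξ hξ L κ K m hL hκ hm hmass
  have h : (a + κ) / m ≤ (hardF ξ L κ K m).real (Set.Ici x) := by
    rw [measureReal_def]
    refine (ENNReal.ofReal_le_iff_le_toReal (measure_ne_top _ _)).1 ?_
    simp only [hardF, Measure.add_apply, Measure.smul_apply, smul_eq_mul,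
      Measure.map_apply hξ measurableSet_Ici]
    have e1 : ENNReal.ofReal a ≤ (volume.restrict (Set.Icc 0 L)) (ξ ⁻¹' Set.Ici x) := by
      rw [Measure.restrict_apply (hξ measurableSet_Ici)]
      calc ENNReal.ofReal a = volume (Set.Ico 0 a) := by simp
        _ ≤ volume (ξ ⁻¹' Set.Ici x ∩ Set.Icc 0 L) := measure_mono fun t ht => ⟨ha t ht, ht.1, ht.2.le.trans haL⟩
    have e2 : (Measure.dirac K) (Set.Ici x) = 1 := by
      rw [Measure.dirac_apply' _ measurableSet_Ici]; simp [hx]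
    rw [e2, mul_one]
    calc ENNReal.ofReal ((a + κ) / m)
        = ENNReal.ofReal (1 / m) * ENNReal.ofReal a + ENNReal.ofReal (κ / m) := by
          rw [← ENNReal.ofReal_mul (by positivity), ← ENNReal.ofReal_add (by positivity) (by positivity)]
          congr 1; ring
      _ ≤ _ := add_le_add (mul_le_mul_right e1 _) le_self_add
  have h2 := probReal_compl_eq_one_sub (μ := hardF ξ L κ K m) (s := Set.Ici x) measurableSet_Ici
  rw [Set.compl_Ici] at h2
  linarith

lemma pow_exp (m : ℕ) (hm : 0 < m) (f a : ℝ) (h0 : 0 ≤ f) (hf1 : f ≤ 1) (h1 : f ≤ 1 - a / m) :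
    f ^ (m+1) ≤ Real.exp (-a) := by
  have hm' : (0:ℝ) < m := by exact_mod_cast hm
  have h2 := Real.one_sub_le_exp_neg (a / m)
  calc f ^ (m+1) ≤ f ^ m := pow_le_pow_of_le_one h0 hf1 (Nat.le_succ m)
    _ ≤ (Real.exp (-(a/m))) ^ m := pow_le_pow_left₀ h0 (h1.trans h2) m
    _ = Real.exp (-a) := by rw [← Real.exp_nat_mul]; congr 1; field_simp

lemma choose_eta (α ε V b : ℝ) (hα : 0 < α) (hε : 0 < ε) (hV : 0 < V) (hb : 1 + b = 1 / α) :
    ∃ η : ℝ, 0 < η ∧ η < 1 ∧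
      (1 + η) * (V + η * V) < (α + ε) * ((1 + b - η) * V - η) := by
  have hlim : ∀ᶠ η : ℝ in nhds 0, (1 + η) * (V + η * V) < (α + ε) * ((1 + b - η) * V - η) := by
    refine ContinuousAt.eventually_lt (by fun_prop) (by fun_prop) ?_
    rw [sub_zero, sub_zero, hb]
    have : (α + ε) * (1 / α * V) = V + ε / α * V := by field_simp
    rw [this]
    have : 0 < ε / α * V := by positivity
    linarith
  have h2 : ∀ᶠ η : ℝ in nhdsWithin 0 (Set.Ioi 0), η ∈ Set.Ioo (0:ℝ) 1 :=
    Ioo_mem_nhdsGT zero_lt_one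
  obtain ⟨η, h1, h2⟩ := ((hlim.filter_mono nhdsWithin_le_nhds).and h2).exists
  exact ⟨η, h2.1, h2.2, h1⟩

theorem delegation_alpha_tight (α : ℝ) (hα : α ∈ Set.Ioo (0:ℝ) 1)
    (hαdef : ∫ u in (0:ℝ)..1, (u - u * Real.log u + 1 / α - 1)⁻¹ = 1) :
    ∀ ε : ℝ, 0 < ε →
    ∃ (n : ℕ) (F : Measure ℝ), 0 < n ∧ IsProbabilityMeasure F ∧
      F {v | v < 0} = 0 ∧
      ∀ R : Set (ℝ × ℝ), MeasurableSet R →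
      ∀ sel : (Fin n → ℝ × ℝ) → Option (Fin n),
        (∀ v i, sel v = some i → v i ∈ R ∧ ∀ j, v j ∈ R → (v j).2 ≤ (v i).2) →
        (∀ v, (∃ i, v i ∈ R) → (sel v).isSome) →
        AEStronglyMeasurable (fun v => ((sel v).map fun i => (v i).1).getD 0)
          (Measure.pi fun _ : Fin n =>
            F.prod ((volume : Measure ℝ).restrict (Set.Icc (0:ℝ) 1))) →
        ∫ v, ((sel v).map fun i => (v i).1).getD 0
            ∂(Measure.pi fun _ : Fin n =>
                F.prod ((volume : Measure ℝ).restrict (Set.Icc (0:ℝ) 1)))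
          < (α + ε) *
              ∫ v, (⨆ i, (v i).1)
                ∂(Measure.pi fun _ : Fin n =>
                    F.prod ((volume : Measure ℝ).restrict (Set.Icc (0:ℝ) 1))) := by
  intro ε hε
  obtain ⟨hα0, hα1⟩ := hα
  obtain ⟨b, hbdef⟩ : ∃ b, b = 1 / α - 1 := ⟨_, rfl⟩
  have hb : 0 < b := by
    rw [hbdef, sub_pos, lt_div_iff₀ hα0]; linarith
  have hI : ∫ u in (0:ℝ)..1, (u - u * Real.log u + b)⁻¹ = 1 := by
    rw [← hαdef]; congr 1; funext u; rw [hbdef]; congr 1; ring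
  obtain ⟨v, g, W, w, hv0, hvd, hgc, hg0, hW0, hW1, hWd, hwc, hφ, hg1⟩ := analytic b hb hI
  have hvm : StrictMono v := strictMono_of_hasDerivAt_pos hvd hg0
  have hvc : Continuous v := continuous_iff_continuousAt.2 fun y => (hvd y).continuousAt
  obtain ⟨V, hV⟩ : ∃ V, V = v 1 := ⟨_, rfl⟩
  have hVpos : 0 < V := by rw [hV, ← hv0]; exact hvm zero_lt_one
  obtain ⟨η, hη0, hη1, hη⟩ := choose_eta α ε V b hα0 hε hVpos (by rw [hbdef]; ring)
  obtain ⟨L, hLdef⟩ : ∃ L, L = -Real.log η := ⟨_, rfl⟩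
  have hL : 0 < L := by rw [hLdef]; have := Real.log_neg hη0 hη1; linarith
  obtain ⟨K, hKdef⟩ : ∃ K, K = V + 1 / ((b + 1) * η) := ⟨_, rfl⟩
  have hKV : V ≤ K := by
    rw [hKdef]; have : 0 < 1 / ((b + 1) * η) := by positivity
    linarith
  obtain ⟨m, hm⟩ := exists_nat_ge (max (L + η) (1 / η))
  have hmass : L + η ≤ m := (le_max_left _ _).trans hm
  have hmη : 1 / η ≤ m := (le_max_right _ _).trans hm
  have hm' : (0:ℝ) < m := by linarith
  have hm0 : 0 < m := by exact_mod_cast hm'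
  set ξ : ℝ → ℝ := fun t => v (Real.exp (-t)) with hξ
  have hξc : Continuous ξ := hvc.comp (by fun_prop)
  have hξm := hξc.measurable
  have hP := hardF_prob ξ hξm L η K m hL.le hη0.le hm' hmass
  have hae : ∀ᵐ x ∂(hardF ξ L η K m), x ∈ Set.Icc 0 K := by
    refine hardF_ae ξ hξm L η K m (hVpos.le.trans hKV) ?_
    intro t ht
    constructor
    · rw [← hv0]; exact hvm.monotone (Real.exp_pos _).le
    · refine le_trans ?_ hKV
      rw [hV]
      refine hvm.monotone ?_
      rw [Real.exp_le_one_iff]; linarith [ht.1]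
  have hφ' : ∀ y ∈ Set.Ioc (0:ℝ) 1,
      m * ∫ x, max (x - W y) 0 ∂(hardF ξ L η K m) ≤ w y + η * V := by
    intro y hy
    obtain ⟨a, ⟨ha0, ha1⟩, hWa, hint⟩ := hφ y hy
    rw [hWa]
    have hva : 0 ≤ v a := by rw [← hv0]; exact hvm.monotone ha0.le
    have hvaV : v a ≤ V := by rw [hV]; exact hvm.monotone ha1
    rw [hardF_integral ξ hξc L η K m hη0.le hm' hmass (fun x => max (x - v a) 0) (by fun_prop)]
    have e0 : max (0 - v a) 0 = 0 := max_eq_right (by linarith)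
    have eK : max (K - v a) 0 = K - v a := max_eq_left (by linarith)
    rw [e0, eK]
    obtain ⟨A, hA⟩ : ∃ A, A = -Real.log a := ⟨_, rfl⟩
    have hA0 : 0 ≤ A := by rw [hA]; have := Real.log_nonpos ha0.le ha1; linarith
    have haA : a = Real.exp (-A) := by rw [hA, neg_neg, Real.exp_log ha0]
    set p : ℝ → ℝ := fun t => max (ξ t - v a) 0 with hp
    have hpc : Continuous p := by fun_prop
    have hpi : ∀ x y, IntervalIntegrable p volume x y := fun x y => hpc.intervalIntegrable x y
    have hpA : ∀ t, A ≤ t → p t = 0 := by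
      intro t ht
      refine max_eq_right ?_
      rw [sub_nonpos, haA]
      exact hvm.monotone (Real.exp_le_exp.2 (by linarith))
    have hpA' : ∀ t, t ≤ A → p t = ξ t - v a := by
      intro t ht
      refine max_eq_left ?_
      rw [sub_nonneg, haA]
      exact hvm.monotone (Real.exp_le_exp.2 (by linarith))
    have e1 : ∫ t in (0:ℝ)..A, p t = w y - 1 / (b + 1) := by
      rw [← hint, ← hA]
      refine intervalIntegral.integral_congr fun t ht => ?_
      rw [Set.uIcc_of_le hA0] at ht
      exact hpA' t ht.2
    have e2 : ∫ t in A..L, p t ≤ 0 := by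
      rcases le_total A L with h | h
      · refine le_of_eq ?_
        rw [intervalIntegral.integral_congr (g := fun _ => (0:ℝ))]
        · simp
        · intro t ht
          rw [Set.uIcc_of_le h] at ht
          exact hpA t ht.1
      · rw [intervalIntegral.integral_symm]
        have := intervalIntegral.integral_nonneg (μ := volume) h (fun u _ => le_max_right (ξ u - v a) 0)
        linarith
    have e3 : ∫ t in Set.Icc 0 L, p t ≤ w y - 1 / (b + 1) := by
      rw [integral_Icc_eq_integral_Ioc, ← intervalIntegral.integral_of_le hL.le,
        ← intervalIntegral.integral_add_adjacent_intervals (hpi 0 A) (hpi A L)]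
      linarith
    have e4 : η * K = η * V + 1 / (b + 1) := by
      rw [hKdef]; field_simp
    have e5 : (m:ℝ) * (1 / m * (∫ t in Set.Icc 0 L, p t) + (η / m * (K - v a)
      + (1 - (L + η) / m) * 0)) = (∫ t in Set.Icc 0 L, p t) + η * (K - v a) := by
      field_simp; ring
    rw [e5]
    nlinarith
  have hfr0 : ∀ x, 0 ≤ (hardF ξ L η K m).real (Set.Iio x) := fun x => measureReal_nonneg
  have hfr1 : ∀ x, (hardF ξ L η K m).real (Set.Iio x) ≤ 1 := fun x => measureReal_le_one
  have hlow := sup_lower m (hardF ξ L η K m) K hae v g hvd hgc hg0 hv0 (by rw [← hV]; exact hKV)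
    η (η / (1 + η)) ?_ ?_
  · refine ⟨m + 1, hardF ξ L η K m, Nat.succ_pos m, hP, ?_, ?_⟩
    · have : ∀ᵐ x ∂(hardF ξ L η K m), ¬ x < 0 := hae.mono fun x hx => not_lt.2 hx.1
      rw [ae_iff] at this
      simpa using this
    · intro R hR sel hsel _ _
      have hup := mech_bound m hm0 (hardF ξ L η K m) K hae W w (η * V) (by positivity) hWd hwc hW0
        hφ' R hR sel hsel
      refine hup.trans_lt ?_
      rw [hW1, ← hV]
      have hmm : ((m:ℝ) + 1) / m ≤ 1 + η := by
        rw [div_le_iff₀ hm']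
        rw [div_le_iff₀ hη0] at hmη
        nlinarith
      have hgi : ∫ u in (0:ℝ)..1, g u = V := by
        rw [intervalIntegral.integral_eq_sub_of_hasDerivAt (fun u _ => hvd u)
          (hgc.intervalIntegrable _ _), hv0, sub_zero, hV]
      have hgv : ∫ u in (0:ℝ)..1, (1 - u - η) * g u = (1 + b - η) * V - 1 / (b + 1) := by
        rw [← hg1, ← hgi, ← intervalIntegral.integral_const_mul, ← intervalIntegral.integral_sub]
        · congr 1; funext u; ring
        · exact (hgc.intervalIntegrable _ _).const_mul _
        · apply Continuous.intervalIntegrable; fun_prop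
      rw [hgv, ← hV] at hlow
      have hKv : (K - V) * (η / (1 + η)) = 1 / (b + 1) - 1 / (b + 1) * (η / (1 + η)) := by
        rw [hKdef]; field_simp; ring
      have hsm : 1 / (b + 1) * (η / (1 + η)) ≤ 1 * η := by
        refine mul_le_mul ?_ ?_ (by positivity) zero_le_one
        · rw [div_le_one (by positivity)]; linarith
        · exact div_le_self hη0.le (by linarith)
      calc ((m:ℝ) + 1) / m * (V + η * V) ≤ (1 + η) * (V + η * V) :=
            mul_le_mul_of_nonneg_right hmm (by positivity)
        _ < (α + ε) * ((1 + b - η) * V - η) := hη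
        _ ≤ _ := by
            refine mul_le_mul_of_nonneg_left ?_ (by positivity)
            refine le_trans ?_ hlow
            rw [hKv]; linarith
  · intro u hu
    have hu0 : 0 ≤ -Real.log u := by have := Real.log_nonpos hu.1.le hu.2; linarith
    have h1 := hardF_Iio ξ hξm L η K m (v u) (min L (-Real.log u)) hL.le hη0.le hm' hmass
      ((hvm.monotone hu.2).trans (by rw [← hV]; exact hKV)) (le_min hL.le hu0) (min_le_left _ _) ?_
    · have h2 := pow_exp m hm0 _ (min L (-Real.log u) + η) (hfr0 _) (hfr1 _) h1
      have h3 : Real.exp (-(min L (-Real.log u) + η)) ≤ u + η := by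
        rcases min_cases L (-Real.log u) with ⟨h, _⟩ | ⟨h, _⟩
        · rw [h]
          calc Real.exp (-(L + η)) ≤ Real.exp (-L) := Real.exp_le_exp.2 (by linarith)
            _ = η := by rw [hLdef, neg_neg, Real.exp_log hη0]
            _ ≤ _ := by linarith [hu.1]
        · rw [h]
          calc Real.exp (-(-Real.log u + η)) ≤ Real.exp (Real.log u) := Real.exp_le_exp.2 (by linarith)
            _ = u := Real.exp_log hu.1
            _ ≤ _ := by linarith
      linarith
    · intro t ht
      refine hvm.monotone ?_
      rw [← Real.log_le_iff_le_exp hu.1]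
      have := ht.2.le.trans (min_le_right _ _)
      linarith
  · intro x hx
    have h1 := hardF_Iio ξ hξm L η K m x 0 hL.le hη0.le hm' hmass hx.2 le_rfl hL.le
      (by intro t ht; exact absurd ht (by simp))
    rw [zero_add] at h1
    have h2 := pow_exp m hm0 _ η (hfr0 _) (hfr1 _) h1
    have h3 : Real.exp (-η) ≤ 1 / (1 + η) := by
      rw [Real.exp_neg, ← one_div]
      refine one_div_le_one_div_of_le (by positivity) ?_
      linarith [Real.add_one_le_exp η]
    have h4 : η / (1 + η) = 1 - 1 / (1 + η) := by field_simp; ring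
    linarith
end

section
/- Let v be a nonnegative integrable random variable, let z be a real number, and set c = E[(v − z)^+]. Let A and B be {0,1}-valued random variables on the same probability space with A ≤ B pointwise and with B independent of v. Then E[A·v − B·c] ≤ E[A·min(v, z)]. -/
open MeasureTheory ProbabilityTheory

/-- Let `v` be a nonnegative integrable random variable, let `z` be a
real number, and set `c = E[(v − z)^+]`.  Let `A` and `B` be `{0,1}`-valued random
variables on the same probability space with `A ≤ B` pointwise and with `B` independent
of `v`.  Then `E[A·v − B·c] ≤ E[A·min(v, z)]`.
Here `(v − z)^+ = max(v − z, 0)`; `z` is the strike price of a box with prize `v` and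
opening cost `c`, `min(v,z)` is its covered call value, `A` indicates that the box's
prize is claimed and `B` that the box is opened, the opening decision being made
without knowledge of `v`. -/
theorem covered_call_bound {Ω : Type*} [MeasurableSpace Ω]
    (μ : Measure Ω) [IsProbabilityMeasure μ]
    (v : Ω → ℝ) (hv_meas : Measurable v) (hv_nonneg : ∀ ω, 0 ≤ v ω)
    (hv_int : Integrable v μ)
    (z c : ℝ) (hc : c = ∫ ω, max (v ω - z) 0 ∂μ)
    (A B : Ω → ℝ) (hA_meas : Measurable A) (hB_meas : Measurable B)
    (hA01 : ∀ ω, A ω = 0 ∨ A ω = 1) (hB01 : ∀ ω, B ω = 0 ∨ B ω = 1)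
    (hAB : ∀ ω, A ω ≤ B ω)
    (hindep : IndepFun B v μ) :
    ∫ ω, (A ω * v ω - B ω * c) ∂μ ≤ ∫ ω, A ω * min (v ω) z ∂μ := by
  have hp : Integrable (fun ω => max (v ω - z) 0) μ :=
    (hv_int.sub (integrable_const z)).pos_part
  have hm : Integrable (fun ω => min (v ω) z) μ := hv_int.inf (integrable_const z)
  have hAb : ∀ᵐ ω ∂μ, ‖A ω‖ ≤ 1 := Filter.Eventually.of_forall fun ω => by
    rcases hA01 ω with h | h <;> simp [h]
  have hBb : ∀ᵐ ω ∂μ, ‖B ω‖ ≤ 1 := Filter.Eventually.of_forall fun ω => by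
    rcases hB01 ω with h | h <;> simp [h]
  have hBi : Integrable B μ :=
    (integrable_const (1 : ℝ)).mono' hB_meas.aestronglyMeasurable hBb
  have hAv : Integrable (fun ω => A ω * v ω) μ :=
    hv_int.bdd_mul hA_meas.aestronglyMeasurable hAb
  have hAm : Integrable (fun ω => A ω * min (v ω) z) μ :=
    hm.bdd_mul hA_meas.aestronglyMeasurable hAb
  have hBp : Integrable (fun ω => B ω * max (v ω - z) 0) μ :=
    hp.bdd_mul hB_meas.aestronglyMeasurable hBb
  have hi : IndepFun B (fun ω => max (v ω - z) 0) μ :=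
    hindep.comp (φ := id) (ψ := fun x : ℝ => max (x - z) 0) measurable_id (by fun_prop)
  have hE : ∫ ω, B ω * max (v ω - z) 0 ∂μ = (∫ ω, B ω ∂μ) * c := by
    rw [hc]
    exact hi.integral_fun_mul_eq_mul_integral hBi.aestronglyMeasurable hp.aestronglyMeasurable
  have hle : ∫ ω, A ω * v ω ∂μ
      ≤ ∫ ω, (A ω * min (v ω) z + B ω * max (v ω - z) 0) ∂μ := by
    refine integral_mono hAv (hAm.add hBp) fun ω => ?_
    have h1 : v ω = min (v ω) z + max (v ω - z) 0 := by
      rcases le_total (v ω) z with h | h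
      · rw [min_eq_left h, max_eq_right (by linarith)]; ring
      · rw [min_eq_right h, max_eq_left (by linarith)]; ring
    have h2 := mul_le_mul_of_nonneg_right (hAB ω) (le_max_right (v ω - z) 0)
    have h3 : A ω * v ω = A ω * min (v ω) z + A ω * max (v ω - z) 0 := by
      rw [← mul_add, ← h1]
    show A ω * v ω ≤ A ω * min (v ω) z + B ω * max (v ω - z) 0
    linarith
  rw [integral_add hAm hBp, hE] at hle
  rw [integral_sub hAv (hBi.mul_const c), integral_mul_const]
  linarith
end

section
/- In the box problem with boxes considered in the fixed exogenous order 1, 2, …, m, there exists a half-infinite interval X of the form (θ,∞) or [θ,∞) such that the κ-thresholding policy with target interval X has expected net value at least (1/2)·E[max_{1≤i≤m} κ_i]; since E[max_i κ_i] is an upper bound on the expected net value of any sequential search procedure (even one free to choose the order of the boxes), this policy attains at least half the expected net value of the optimal search procedure. -/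
open MeasureTheory ProbabilityTheory

open Classical in
/-- The (realized) net value of the `κ`-thresholding policy with target interval `X` in
the box problem with exogenous order `1,…,m`: going through boxes in order it skips
every box with `z i ∉ X`, opens every box with `z i ∈ X` (paying `c i`), and stops and
claims the prize of the first opened box whose prize `v i` lies in `X`.  Since `X` is
a half-infinite interval, the policy stops exactly at the first `i` with
`κ i = min (v i) (z i) ∈ X`, having opened all boxes `j ≤ i` with `z j ∈ X`. -/
noncomputable def kappaThreshNet {m : ℕ} (v z c : Fin m → ℝ) (X : Set ℝ) : ℝ :=
  match Fin.find? (fun i => decide (min (v i) (z i) ∈ X)) with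
  | some i => v i - ∑ j ∈ Finset.univ.filter (fun j : Fin m => z j ∈ X ∧ j ≤ i), c j
  | none => - ∑ j ∈ Finset.univ.filter (fun j : Fin m => z j ∈ X), c j


/-- Indicator that the covered call value exceeds the threshold. -/
noncomputable def kInd (θ z x : ℝ) : ℝ := if θ < min x z then 1 else 0

/-- Contribution of an opened box. -/
noncomputable def kGain (θ z c x : ℝ) : ℝ :=
  (if θ < min x z then x else 0) - (if θ < z then c else 0)

lemma kInd_nonneg (θ z x : ℝ) : 0 ≤ kInd θ z x := by unfold kInd; split_ifs <;> norm_num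

lemma kInd_le_one (θ z x : ℝ) : kInd θ z x ≤ 1 := by unfold kInd; split_ifs <;> norm_num

lemma measurable_kInd (θ z : ℝ) : Measurable (kInd θ z) := by
  unfold kInd
  exact Measurable.ite (measurableSet_lt measurable_const (measurable_id.min measurable_const))
    measurable_const measurable_const

lemma measurable_kGain (θ z c : ℝ) : Measurable (kGain θ z c) := by
  unfold kGain
  exact (Measurable.ite (measurableSet_lt measurable_const (measurable_id.min measurable_const))
    measurable_id measurable_const).sub measurable_const

lemma kGain_eq (θ z c x : ℝ) :
    kGain θ z c x = θ * kInd θ z x + max (min x z - θ) 0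
      + (if θ < z then max (x - z) 0 - c else 0) := by
  unfold kGain kInd
  rcases le_total x z with h | h
  · have h1 : max (x - z) 0 = 0 := max_eq_right (by linarith)
    rw [min_eq_left h, h1]
    by_cases h2 : θ < x
    · have h3 : θ < z := by linarith
      rw [max_eq_left (by linarith)]
      simp [h2, h3]
      ring
    · rw [max_eq_right (by linarith)]
      by_cases h3 : θ < z <;> simp [h2, h3]
  · have h1 : max (x - z) 0 = x - z := max_eq_left (by linarith)
    rw [min_eq_right h, h1]
    by_cases h2 : θ < z
    · rw [max_eq_left (by linarith)]
      simp [h2]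
      ring
    · rw [max_eq_right (by linarith)]
      simp [h2]

lemma kProd_eq_one {m : ℕ} (v z : Fin m → ℝ) (θ : ℝ) (i : Fin m)
    (h : ∀ j < i, ¬ θ < min (v j) (z j)) :
    ∏ j with j < i, (1 - kInd θ (z j) (v j)) = 1 := by
  apply Finset.prod_eq_one
  intro j hj
  simp only [Finset.mem_filter, Finset.mem_univ, true_and] at hj
  have := h j hj
  unfold kInd
  rw [if_neg this]; norm_num

lemma kappaThreshNet_eq {m : ℕ} (v z c : Fin m → ℝ) (θ : ℝ) :
    kappaThreshNet v z c (Set.Ioi θ) =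
      ∑ i, (∏ j with j < i, (1 - kInd θ (z j) (v j))) * kGain θ (z i) (c i) (v i) := by
  classical
  unfold kappaThreshNet
  split
  · rename_i i hi
    rw [Fin.find?_eq_some_iff] at hi
    obtain ⟨h1, h2⟩ := hi
    simp only [decide_eq_true_eq, decide_eq_false_iff_not, Set.mem_Ioi] at h1 h2
    have key : ∀ k : Fin m, (∏ j with j < k, (1 - kInd θ (z j) (v j))) *
        kGain θ (z k) (c k) (v k)
        = (if k = i then v i else 0) - (if z k ∈ Set.Ioi θ ∧ k ≤ i then c k else 0) := by
      intro k
      by_cases hk : k ≤ i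
      · rw [kProd_eq_one v z θ k (fun j hj => h2 j (lt_of_lt_of_le hj hk)), one_mul]
        unfold kGain
        rcases eq_or_lt_of_le hk with rfl | hlt
        · simp only [h1, if_true, le_refl, and_true, Set.mem_Ioi]
        · simp only [h2 k hlt, hlt.ne, hlt.le, if_false, and_true, Set.mem_Ioi]
      · have hki : i < k := lt_of_not_ge hk
        rw [Finset.prod_eq_zero (i := i)]
        · simp [hk, hki.ne']
        · simp [hki]
        · unfold kInd
          rw [if_pos h1]; norm_num
    rw [Finset.sum_congr rfl (fun k _ => key k), Finset.sum_sub_distrib, Finset.sum_filter]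
    simp
  · rename_i hi
    rw [Fin.find?_eq_none_iff] at hi
    simp only [decide_eq_false_iff_not, Set.mem_Ioi] at hi
    rw [Finset.sum_filter, ← Finset.sum_neg_distrib]
    apply Finset.sum_congr rfl
    intro k _
    rw [kProd_eq_one v z θ k (fun j _ => hi j), one_mul]
    unfold kGain
    rw [if_neg (hi k), zero_sub]
    rfl

/-- In the box problem with boxes considered in the fixed exogenous
order `1,…,m` (independent nonnegative prizes `v i`, opening costs `c i ≥ 0`, strike
prices `z i` with `E[(v i − z i)^+] = c i`, covered call values
`κ i = min (v i) (z i)`), there exists a half-infinite target interval `X = (θ,∞)` or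
`X = [θ,∞)` such that the `κ`-thresholding policy with target interval `X` has
expected net value at least `(1/2)·E[max_i κ_i]`; since `E[max_i κ_i]` bounds the
expected net value of any sequential search procedure (even one free to choose the
order of the boxes), this policy attains at least half the expected net value of the
optimal search procedure. -/
theorem kappa_thresholding_half {Ω : Type*} [MeasurableSpace Ω]
    (μ : Measure Ω) [IsProbabilityMeasure μ]
    (m : ℕ) (hm : 0 < m) (v : Fin m → Ω → ℝ)
    (hmeas : ∀ i, Measurable (v i))
    (hnonneg : ∀ i ω, 0 ≤ v i ω)
    (hint : ∀ i, Integrable (v i) μ)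
    (hindep : iIndepFun v μ)
    (z c : Fin m → ℝ) (hc_nonneg : ∀ i, 0 ≤ c i)
    (hstrike : ∀ i, ∫ ω, max (v i ω - z i) 0 ∂μ = c i) :
    ∃ X : Set ℝ, ((∃ θ, X = Set.Ioi θ) ∨ (∃ θ, X = Set.Ici θ)) ∧
      (1 / 2) * (∫ ω, (⨆ i, min (v i ω) (z i)) ∂μ)
        ≤ ∫ ω, kappaThreshNet (fun i => v i ω) z c X ∂μ := by
  have : Nonempty (Fin m) := ⟨⟨0, hm⟩⟩
  set E := ∫ ω, (⨆ i, min (v i ω) (z i)) ∂μ with hE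
  obtain ⟨θ, hθ⟩ : ∃ θ : ℝ, θ = 1 / 2 * E := ⟨_, rfl⟩
  refine ⟨Set.Ioi θ, Or.inl ⟨θ, rfl⟩, ?_⟩
  simp_rw [kappaThreshNet_eq]
  -- integrability facts
  have hIk : ∀ i, Integrable (fun ω => min (v i ω) (z i)) μ :=
    fun i => (hint i).inf (integrable_const _)
  have hIg : ∀ i, Integrable (fun ω => max (min (v i ω) (z i) - θ) 0) μ :=
    fun i => ((hIk i).sub (integrable_const _)).sup (integrable_const 0)
  have hIs : ∀ i, Integrable (fun ω => max (v i ω - z i) 0) μ :=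
    fun i => ((hint i).sub (integrable_const _)).sup (integrable_const 0)
  have hmInd : ∀ i, Measurable (fun ω => kInd θ (z i) (v i ω)) :=
    fun i => (measurable_kInd θ (z i)).comp (hmeas i)
  have hbdd : ∀ f : Ω → ℝ, Measurable f → (∀ ω, 0 ≤ f ω) → (∀ ω, f ω ≤ 1) → Integrable f μ := by
    intro f hf h0 h1
    refine Integrable.of_bound hf.aestronglyMeasurable 1 (Filter.Eventually.of_forall fun ω => ?_)
    rw [Real.norm_eq_abs, abs_of_nonneg (h0 ω)]; exact h1 ω
  have hIInd : ∀ i, Integrable (fun ω => kInd θ (z i) (v i ω)) μ :=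
    fun i => hbdd _ (hmInd i) (fun _ => kInd_nonneg _ _ _) (fun _ => kInd_le_one _ _ _)
  have hu0 : ∀ i ω, 0 ≤ 1 - kInd θ (z i) (v i ω) := fun i ω => sub_nonneg.2 (kInd_le_one _ _ _)
  have hu1 : ∀ i ω, 1 - kInd θ (z i) (v i ω) ≤ 1 := fun i ω => sub_le_self _ (kInd_nonneg _ _ _)
  have hIprod : ∀ s : Finset (Fin m), Integrable (fun ω => ∏ j ∈ s, (1 - kInd θ (z j) (v j ω))) μ :=
    fun s => hbdd _ (Finset.measurable_fun_prod s fun j _ => (hmInd j).const_sub 1)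
      (fun ω => Finset.prod_nonneg fun j _ => hu0 j ω)
      (fun ω => Finset.prod_le_one (fun j _ => hu0 j ω) fun j _ => hu1 j ω)
  have hIgain : ∀ i, Integrable (fun ω => kGain θ (z i) (c i) (v i ω)) μ := by
    intro i
    simp_rw [kGain_eq]
    refine (((hIInd i).const_mul θ).add (hIg i)).add ?_
    split_ifs
    · exact (hIs i).sub (integrable_const _)
    · exact integrable_const _
  have hEgain : ∀ i, ∫ ω, kGain θ (z i) (c i) (v i ω) ∂μ =
      θ * ∫ ω, kInd θ (z i) (v i ω) ∂μ + ∫ ω, max (min (v i ω) (z i) - θ) 0 ∂μ := by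
    intro i
    simp_rw [kGain_eq]
    by_cases h : θ < z i
    · simp only [h, if_true]
      have hA : Integrable (fun ω => θ * kInd θ (z i) (v i ω) + max (min (v i ω) (z i) - θ) 0) μ :=
        ((hIInd i).const_mul θ).add (hIg i)
      have hB : Integrable (fun ω => max (v i ω - z i) 0 - c i) μ :=
        (hIs i).sub (integrable_const _)
      rw [integral_add hA hB,
        integral_add ((hIInd i).const_mul θ) (hIg i), integral_const_mul,
        integral_sub (hIs i) (integrable_const _), hstrike i]
      simp
    · simp only [h, if_false, add_zero]
      rw [integral_add ((hIInd i).const_mul θ) (hIg i), integral_const_mul]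
  -- independence
  have hind : ∀ (i : Fin m), IndepFun (fun ω => ∏ j with j < i, (1 - kInd θ (z j) (v j ω)))
      (v i) μ := by
    intro i
    have h := hindep.indepFun_finset (Finset.univ.filter (· < i)) {i} (by simp) hmeas
    have hψ : Measurable (fun x : ({i} : Finset (Fin m)) → ℝ => x ⟨i, by simp⟩) :=
      measurable_pi_apply _
    have h' := h.comp
      (φ := fun x : (Finset.univ.filter (· < i)) → ℝ =>
        ∏ j : (Finset.univ.filter (· < i)), (1 - kInd θ (z j) (x j)))
      (ψ := fun x : ({i} : Finset (Fin m)) → ℝ => x ⟨i, by simp⟩)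
      (Finset.measurable_fun_prod _ fun j _ =>
        ((measurable_kInd θ (z j)).comp (measurable_pi_apply j)).const_sub 1)
      hψ
    convert h' using 1
    · funext ω
      exact (Finset.prod_coe_sort (Finset.univ.filter (· < i))
        (fun j => 1 - kInd θ (z j) (v j ω))).symm
    · rfl
  have hsplit : ∀ (i : Fin m) (f : ℝ → ℝ), Measurable f →
      ∫ ω, (∏ j with j < i, (1 - kInd θ (z j) (v j ω))) * f (v i ω) ∂μ =
      (∫ ω, ∏ j with j < i, (1 - kInd θ (z j) (v j ω)) ∂μ) * ∫ ω, f (v i ω) ∂μ := by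
    intro i f hf
    have h : IndepFun (fun ω => ∏ j with j < i, (1 - kInd θ (z j) (v j ω)))
      (fun ω => f (v i ω)) μ := (hind i).comp measurable_id hf
    exact h.integral_fun_mul_eq_mul_integral
      (hIprod _).aestronglyMeasurable (hf.comp (hmeas i)).aestronglyMeasurable
  have hImul : ∀ (i : Fin m) (f : ℝ → ℝ), Measurable f → Integrable (fun ω => f (v i ω)) μ →
      Integrable (fun ω => (∏ j with j < i, (1 - kInd θ (z j) (v j ω))) * f (v i ω)) μ := by
    intro i f hf hfi
    have h : IndepFun (fun ω => ∏ j with j < i, (1 - kInd θ (z j) (v j ω)))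
      (fun ω => f (v i ω)) μ := (hind i).comp measurable_id hf
    exact h.integrable_mul (hIprod _) hfi
  rw [integral_finsetSum _ (fun i _ => hImul i _ (measurable_kGain _ _ _) (hIgain i))]
  simp_rw [fun i => hsplit i _ (measurable_kGain θ (z i) (c i)), hEgain]
  set a : Fin m → ℝ := fun i => ∫ ω, ∏ j with j < i, (1 - kInd θ (z j) (v j ω)) ∂μ with ha
  set p : Fin m → ℝ := fun i => ∫ ω, kInd θ (z i) (v i ω) ∂μ with hp
  set g : Fin m → ℝ := fun i => ∫ ω, max (min (v i ω) (z i) - θ) 0 ∂μ with hg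
  set n : ℝ := ∫ ω, ∏ j, (1 - kInd θ (z j) (v j ω)) ∂μ with hn
  -- telescoping
  have htel : ∑ i, a i * p i = 1 - n := by
    have h1 : n = ∫ ω, (1 - ∑ i, (∏ j with j < i, (1 - kInd θ (z j) (v j ω))) *
        kInd θ (z i) (v i ω)) ∂μ := by
      rw [hn]
      refine integral_congr_ae (Filter.Eventually.of_forall fun ω => ?_)
      simp only
      rw [Finset.prod_one_sub_ordered]
      simp_rw [mul_comm]
    rw [integral_sub (integrable_const _) (integrable_finsetSum _
      fun i _ => hImul i _ (measurable_kInd _ _) (hIInd i)),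
      integral_finsetSum _ (fun i _ => hImul i _ (measurable_kInd _ _) (hIInd i))] at h1
    simp_rw [fun i => hsplit i _ (measurable_kInd θ (z i))] at h1
    simp only [integral_const, probReal_univ, smul_eq_mul, mul_one] at h1
    simp only [ha, hp]
    linarith
  have hn0 : 0 ≤ n := integral_nonneg fun ω => Finset.prod_nonneg fun j _ => hu0 j ω
  have hna : ∀ i, n ≤ a i := fun i => integral_mono (hIprod _) (hIprod _) fun ω =>
    Finset.prod_le_prod_of_subset_of_le_one (Finset.filter_subset _ _)
      (fun j _ => hu0 j ω) (fun j _ _ => hu1 j ω)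
  have hg0 : ∀ i, 0 ≤ g i := fun i => integral_nonneg fun ω => le_max_right _ _
  have hEg : E - θ ≤ ∑ i, g i := by
    by_cases hI : Integrable (fun ω => ⨆ i, min (v i ω) (z i)) μ
    · have : E - θ = ∫ ω, ((⨆ i, min (v i ω) (z i)) - θ) ∂μ := by
        rw [integral_sub hI (integrable_const _)]; simp [hE]
      rw [this, ← integral_finsetSum _ (fun i _ => hIg i)]
      refine integral_mono (hI.sub (integrable_const _))
        (integrable_finsetSum _ fun i _ => hIg i) fun ω => ?_
      simp only
      rw [sub_le_iff_le_add]
      refine ciSup_le fun i => ?_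
      rw [← sub_le_iff_le_add]
      exact (le_max_left _ 0).trans (Finset.single_le_sum
        (f := fun i => max (min (v i ω) (z i) - θ) 0) (fun j _ => le_max_right _ _)
        (Finset.mem_univ i))
    · have : E = 0 := integral_undef hI
      have h0 : θ = 0 := by rw [hθ, this]; ring
      rw [this, h0, sub_zero]
      exact Finset.sum_nonneg fun i _ => hg0 i
  have h1 : ∑ i, a i * (θ * p i + g i) = θ * (1 - n) + ∑ i, a i * g i := by
    rw [← htel, Finset.mul_sum, ← Finset.sum_add_distrib]
    exact Finset.sum_congr rfl fun i _ => by ring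
  have h2 : n * ∑ i, g i ≤ ∑ i, a i * g i := by
    rw [Finset.mul_sum]
    exact Finset.sum_le_sum fun i _ => mul_le_mul_of_nonneg_right (hna i) (hg0 i)
  have h3 : n * (E - θ) ≤ n * ∑ i, g i := mul_le_mul_of_nonneg_left hEg hn0
  have hE2 : E = 2 * θ := by rw [hθ]; ring
  calc 1 / 2 * E = θ * (1 - n) + n * (E - θ) := by rw [hE2]; ring
    _ ≤ θ * (1 - n) + ∑ i, a i * g i := by linarith
    _ = _ := h1.symm
end

section
/- Consider the box problem with boxes relabeled so that z_1 ≥ z_2 ≥ … ≥ z_m, and Weitzman's search procedure: it considers boxes in this order and, before each box i, stops if z_i < 0 or if the maximum prize among boxes already opened is at least z_i; otherwise it opens box i (paying c_i); upon stopping (or after all boxes are opened) it claims the maximum prize among opened boxes, or claims nothing if that maximum is not positive. Then the expected net value of Weitzman's procedure is at most E[max(0, max_{1≤i≤m} κ_i)], the expectation of the maximum covered call value. -/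
open MeasureTheory ProbabilityTheory

open Classical in
/-- The number of boxes opened by Weitzman's search procedure on realized prizes `v`
with strike prices `z` (boxes labeled so that `z` is nonincreasing): the procedure
considers boxes in order and, before each box `k`, stops if `z k < 0` or if the
maximum prize among the boxes already opened (namely `0,…,k−1`) is at least `z k`;
otherwise it opens box `k`.  The result is the first such `k`, or `m` if the
procedure opens every box. -/
noncomputable def weitzmanStopIndex {m : ℕ} (v z : Fin m → ℝ) : ℕ :=
  sInf {k : ℕ | k = m ∨ ∃ hk : k < m,
    (z ⟨k, hk⟩ < 0 ∨ ∃ j : Fin m, (j : ℕ) < k ∧ z ⟨k, hk⟩ ≤ v j)}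

open Classical in
/-- The realized net value of Weitzman's procedure: upon stopping (or after opening all
boxes) it claims the maximum prize among opened boxes — claiming nothing if that
maximum is not positive — minus the opening costs of all opened boxes. -/
noncomputable def weitzmanNet {m : ℕ} (v z c : Fin m → ℝ) : ℝ :=
  (⨆ j : Fin m, if (j : ℕ) < weitzmanStopIndex v z then v j else 0)
    - ∑ j ∈ Finset.univ.filter (fun j : Fin m => (j : ℕ) < weitzmanStopIndex v z), c j

open Classical in
lemma lt_weitzmanStopIndex_iff {m : ℕ} (v z : Fin m → ℝ) (j : Fin m) :
    (j : ℕ) < weitzmanStopIndex v z ↔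
      ∀ k : Fin m, k ≤ j → 0 ≤ z k ∧ ∀ i : Fin m, i < k → v i < z k := by
  unfold weitzmanStopIndex
  constructor
  · intro h k hk
    have h2 := Nat.notMem_of_lt_sInf (lt_of_le_of_lt (show (k : ℕ) ≤ j from hk) h)
    simp only [Set.mem_setOf_eq, not_or, not_exists, not_and, not_le, not_lt] at h2
    have h3 := h2.2 k.2
    exact ⟨h3.1, fun i hi => h3.2 i hi⟩
  · intro h
    by_contra hcon
    push Not at hcon
    have hne : {k : ℕ | k = m ∨ ∃ hk : k < m,
      (z ⟨k, hk⟩ < 0 ∨ ∃ j : Fin m, (j : ℕ) < k ∧ z ⟨k, hk⟩ ≤ v j)}.Nonempty := ⟨m, Or.inl rfl⟩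
    rcases Nat.sInf_mem hne with h1 | ⟨hk, h1⟩
    · have := j.2
      omega
    · have h2 := h ⟨_, hk⟩ hcon
      rcases h1 with h1 | ⟨i, hi, h1⟩
      · linarith [h2.1]
      · linarith [h2.2 i hi]

open Classical in
lemma weitzmanNet_le {m : ℕ} (hm : 0 < m) (v z c : Fin m → ℝ) :
    weitzmanNet v z c ≤ max 0 (⨆ i, min (v i) (z i)) +
      ∑ j : Fin m, (if (j : ℕ) < weitzmanStopIndex v z then (1 : ℝ) else 0) *
        (max (v j - z j) 0 - c j) := by
  have : Nonempty (Fin m) := ⟨⟨0, hm⟩⟩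
  unfold weitzmanNet
  have e : ∑ j : Fin m, (if (j : ℕ) < weitzmanStopIndex v z then (1 : ℝ) else 0) *
        (max (v j - z j) 0 - c j) =
      ∑ j : Fin m, (if (j : ℕ) < weitzmanStopIndex v z then max (v j - z j) 0 else 0) -
      ∑ j ∈ Finset.univ.filter (fun j : Fin m => (j : ℕ) < weitzmanStopIndex v z), c j := by
    rw [Finset.sum_filter, ← Finset.sum_sub_distrib]
    refine Finset.sum_congr rfl fun j _ => ?_
    split_ifs <;> simp
  rw [e, add_sub]
  refine sub_le_sub_right (ciSup_le fun j => ?_) _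
  have hnn : ∀ j : Fin m, 0 ≤
      (if (j : ℕ) < weitzmanStopIndex v z then max (v j - z j) 0 else 0) := by
    intro j
    split_ifs <;> simp
  have h1 := Finset.single_le_sum (fun j _ => hnn j) (Finset.mem_univ j)
  have h2 : min (v j) (z j) ≤ ⨆ i, min (v i) (z i) :=
    le_ciSup (f := fun i => min (v i) (z i)) (Set.finite_range _).bddAbove j
  have h3 := le_max_left 0 (⨆ i, min (v i) (z i))
  have h4 := le_max_right 0 (⨆ i, min (v i) (z i))
  have h5 : v j = min (v j) (z j) + max (v j - z j) 0 := by
    rcases le_total (v j) (z j) with h | h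
    · rw [min_eq_left h, max_eq_right (by linarith)]; ring
    · rw [min_eq_right h, max_eq_left (by linarith)]; ring
  split_ifs with h
  · simp only [if_pos h] at h1
    linarith
  · linarith [hnn j]

open Classical in
lemma weitzman_term {Ω : Type*} [MeasurableSpace Ω]
    (μ : Measure Ω) [IsProbabilityMeasure μ]
    (m : ℕ) (v : Fin m → Ω → ℝ)
    (hmeas : ∀ i, Measurable (v i))
    (hint : ∀ i, Integrable (v i) μ)
    (hindep : iIndepFun v μ)
    (z c : Fin m → ℝ)
    (hstrike : ∀ i, ∫ ω, max (v i ω - z i) 0 ∂μ = c i) (j : Fin m) :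
    Integrable (fun ω => (if (j : ℕ) < weitzmanStopIndex (fun i => v i ω) z then (1 : ℝ) else 0) *
        (max (v j ω - z j) 0 - c j)) μ ∧
    ∫ ω, (if (j : ℕ) < weitzmanStopIndex (fun i => v i ω) z then (1 : ℝ) else 0) *
        (max (v j ω - z j) 0 - c j) ∂μ = 0 := by
  let S : Finset (Fin m) := Finset.univ.filter (· < j)
  let g : (S → ℝ) → ℝ := Set.indicator
    {w | ∀ k : Fin m, k ≤ j → 0 ≤ z k ∧ ∀ i : S, (i : Fin m) < k → w i < z k} 1
  have hg : Measurable g := by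
    refine measurable_one.indicator ?_
    simp only [measurableSet_setOf]
    refine Measurable.forall fun k => Measurable.imp measurable_const
      (Measurable.and measurable_const (Measurable.forall fun i => Measurable.imp measurable_const ?_))
    exact measurableSet_setOf.1 (measurableSet_lt (measurable_pi_apply i) measurable_const)
  let X : Ω → S → ℝ := fun ω i => v i ω
  have hX : Measurable X := measurable_pi_lambda _ fun i => hmeas i
  let f : ℝ → ℝ := fun x => max (x - z j) 0 - c j
  have hf : Measurable f := by fun_prop
  have heq : ∀ ω, (if (j : ℕ) < weitzmanStopIndex (fun i => v i ω) z then (1 : ℝ) else 0)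
      = (g ∘ X) ω := by
    intro ω
    simp only [g, X, Function.comp, Set.indicator, Set.mem_setOf_eq, lt_weitzmanStopIndex_iff,
      Pi.one_apply]
    congr 1
    refine propext (forall_congr' fun k => forall_congr' fun hk => and_congr_right fun _ => ?_)
    constructor
    · intro h i hi
      exact h i hi
    · intro h i hi
      exact h ⟨i, by simp only [S, Finset.mem_filter, Finset.mem_univ, true_and]; exact lt_of_lt_of_le hi hk⟩ hi
  have hmx : Integrable (fun ω => max (v j ω - z j) 0) μ :=
    ((hint j).sub (integrable_const (z j))).pos_part
  have hfi : Integrable (f ∘ v j) μ := hmx.sub (integrable_const (c j))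
  have hf0 : ∫ ω, (f ∘ v j) ω ∂μ = 0 := by
    have : ∫ ω, (f ∘ v j) ω ∂μ = ∫ ω, max (v j ω - z j) 0 ∂μ - ∫ ω, c j ∂μ :=
      integral_sub hmx (integrable_const (c j))
    rw [this, hstrike]
    simp
  have hgi : Integrable (g ∘ X) μ := by
    refine Integrable.of_bound (hg.comp hX).aestronglyMeasurable 1 (ae_of_all _ fun ω => ?_)
    rw [← heq]
    split_ifs <;> simp
  have hind : IndepFun (g ∘ X) (f ∘ v j) μ := by
    have h := hindep.indepFun_finset S {j} (by simp [S]) hmeas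
    exact h.comp (ψ := fun w : (({j} : Finset (Fin m)) → ℝ) => f (w ⟨j, by simp⟩)) hg
      (hf.comp (measurable_pi_apply _))
  have hfun : (fun ω => (if (j : ℕ) < weitzmanStopIndex (fun i => v i ω) z then (1 : ℝ) else 0) *
        (max (v j ω - z j) 0 - c j)) = (g ∘ X) * (f ∘ v j) := by
    funext ω
    rw [heq]
    rfl
  rw [hfun]
  refine ⟨hind.integrable_mul hgi hfi, ?_⟩
  have := hind.integral_mul_eq_mul_integral hgi.aestronglyMeasurable hfi.aestronglyMeasurable
  rw [this, hf0, mul_zero]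

/-- In the box problem (independent nonnegative prizes `v i`, opening
costs `c i ≥ 0`, strike prices `z i` with `E[(v i − z i)^+] = c i`, covered call
values `κ i = min (v i) (z i)`), with boxes relabeled so that `z 1 ≥ z 2 ≥ … ≥ z m`,
the expected net value of Weitzman's search procedure is at most
`E[max(0, max_i κ_i)]`, the expectation of the maximum covered call value. -/
theorem weitzman_max_kappa_bound {Ω : Type*} [MeasurableSpace Ω]
    (μ : Measure Ω) [IsProbabilityMeasure μ]
    (m : ℕ) (hm : 0 < m) (v : Fin m → Ω → ℝ)
    (hmeas : ∀ i, Measurable (v i))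
    (hnonneg : ∀ i ω, 0 ≤ v i ω)
    (hint : ∀ i, Integrable (v i) μ)
    (hindep : iIndepFun v μ)
    (z c : Fin m → ℝ) (hc_nonneg : ∀ i, 0 ≤ c i)
    (hstrike : ∀ i, ∫ ω, max (v i ω - z i) 0 ∂μ = c i)
    (hsorted : ∀ i j : Fin m, i ≤ j → z j ≤ z i) :
    ∫ ω, weitzmanNet (fun i => v i ω) z c ∂μ
      ≤ ∫ ω, max 0 (⨆ i, min (v i ω) (z i)) ∂μ := by
  classical
  have : Nonempty (Fin m) := ⟨⟨0, hm⟩⟩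
  by_cases hN : Integrable (fun ω => weitzmanNet (fun i => v i ω) z c) μ
  swap
  · rw [integral_undef hN]
    exact integral_nonneg fun ω => le_max_left _ _
  have hT := weitzman_term μ m v hmeas hint hindep z c hstrike
  have hM : Integrable (fun ω => max 0 (⨆ i, min (v i ω) (z i))) μ := by
    refine Integrable.mono' (integrable_finsetSum Finset.univ fun i _ => hint i)
      (measurable_const.max (Measurable.iSup fun i => (hmeas i).min measurable_const)).aestronglyMeasurable
      (ae_of_all _ fun ω => ?_)
    rw [Real.norm_of_nonneg (le_max_left _ _)]
    refine max_le (Finset.sum_nonneg fun i _ => hnonneg i ω) (ciSup_le fun i => ?_)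
    exact (min_le_left _ _).trans
      (Finset.single_le_sum (f := fun i => v i ω) (fun i _ => hnonneg i ω) (Finset.mem_univ i))
  have hS := integrable_finsetSum Finset.univ fun j _ => (hT j).1
  refine (integral_mono hN (hM.add hS) fun ω => weitzmanNet_le hm (fun i => v i ω) z c).trans ?_
  simp only [Pi.add_apply]
  rw [integral_add hM hS, integral_finsetSum _ fun j _ => (hT j).1,
    Finset.sum_eq_zero fun j _ => (hT j).2, add_zero]
end

section
/- In the binary model of delegated search, there exists a half-infinite interval X of the form (θ,∞) or [θ,∞) with θ ≥ 0 such that the following delegated process has expected net value at least (1/2)·E[max(0, max_{1≤i≤m} κ_i)]: the agent tests the solutions in { i : z_i ∈ X } one at a time in nonincreasing order of w_i = y_i − c_i/p_i (paying cost c_i for each test), stops at the first solution found to be feasible and proposes it, and the principal adopts the proposal; the net value is the principal's value x_i of the adopted solution (0 if no tested solution is feasible) minus the total testing cost incurred. Since E[max(0, max_i κ_i)] is an upper bound on the expected net value of any sequential search the principal could perform herself, this mechanism attains at least half the expected net value of the principal's optimal autonomous search. -/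
open MeasureTheory ProbabilityTheory

open Classical in
/-- The realized net value of the delegated search process in the binary model, for a
realized feasibility pattern `feas`, when the principal's eligible set consists of the
feasible solutions with `z i ∈ X` and the agent tests the solutions `{i : z i ∈ X}`
in the order `π 0, π 1, …` (an ordering by nonincreasing agent priority `w`), paying
`c i` for each test, stopping at the first solution found feasible and proposing it
(which the principal adopts): the net value is the principal's value `x` of the
adopted solution (`0` if no tested solution is feasible) minus the total testing
cost incurred. -/
noncomputable def delegatedBinaryNet {m : ℕ} (feas : Fin m → Prop) (x z c : Fin m → ℝ)
    (π : Equiv.Perm (Fin m)) (X : Set ℝ) : ℝ :=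
  match Fin.find? (fun k => z (π k) ∈ X ∧ feas (π k)) with
  | some k =>
      x (π k) - ∑ l ∈ Finset.univ.filter (fun l : Fin m => z (π l) ∈ X ∧ l ≤ k), c (π l)
  | none => - ∑ l ∈ Finset.univ.filter (fun l : Fin m => z (π l) ∈ X), c (π l)

theorem delegatedBinaryNet_eq_sum {m : ℕ} (f : Fin m → Bool) (x z c : Fin m → ℝ)
    (π : Equiv.Perm (Fin m)) (θ : ℝ) (b d : Fin m → ℝ)
    (hb : ∀ k, b k = if θ ≤ z (π k) ∧ f (π k) = true then 1 else 0)
    (hd : ∀ k, d k = if θ ≤ z (π k) then c (π k) else 0) :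
    delegatedBinaryNet (fun i => f i = true) x z c π (Set.Ici θ) =
      ∑ k, (∏ j ∈ Finset.univ.filter (fun j => j < k), (1 - b j)) * (x (π k) * b k - d k) := by
  classical
  unfold delegatedBinaryNet
  split
  · rename_i k hk
    rw [Fin.find?_eq_some_iff] at hk
    simp only [decide_eq_true_eq, decide_eq_false_iff_not, Set.mem_Ici] at hk
    obtain ⟨hk1, hk2⟩ := hk
    have hterm : ∀ l, (∏ j ∈ Finset.univ.filter (fun j => j < l), (1 - b j)) *
        (x (π l) * b l - d l) =
        (if l = k then x (π k) else 0) - (if θ ≤ z (π l) ∧ l ≤ k then c (π l) else 0) := by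
      intro l
      rcases lt_trichotomy l k with h | h | h
      · have h1 : ∏ j ∈ Finset.univ.filter (fun j => j < l), (1 - b j) = 1 := by
          apply Finset.prod_eq_one
          intro j hj
          simp only [Finset.mem_filter, Finset.mem_univ, true_and] at hj
          rw [hb, if_neg (hk2 j (hj.trans h))]; simp
        rw [h1, hb, if_neg (hk2 l h), hd]
        simp [h.ne, h.le]
      · subst h
        have h1 : ∏ j ∈ Finset.univ.filter (fun j => j < l), (1 - b j) = 1 := by
          apply Finset.prod_eq_one
          intro j hj
          simp only [Finset.mem_filter, Finset.mem_univ, true_and] at hj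
          rw [hb, if_neg (hk2 j hj)]; simp
        rw [h1, hb, if_pos hk1, hd]
        simp
      · have h1 : ∏ j ∈ Finset.univ.filter (fun j => j < l), (1 - b j) = 0 := by
          apply Finset.prod_eq_zero (i := k)
          · simpa using h
          · rw [hb, if_pos hk1]; simp
        rw [h1]
        simp [h.ne', h.not_ge]
    rw [Finset.sum_congr rfl (fun l _ => hterm l), Finset.sum_sub_distrib, Finset.sum_filter]
    simp
  · rename_i hk
    rw [Fin.find?_eq_none_iff] at hk
    simp only [decide_eq_false_iff_not, Set.mem_Ici] at hk
    have hb0 : ∀ j, b j = 0 := fun j => by rw [hb, if_neg (hk j)]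
    simp [hb0, hd, Finset.sum_filter]

theorem delegated_core {Ω : Type*} [MeasurableSpace Ω]
    (μ : Measure Ω) [IsProbabilityMeasure μ] {m : ℕ}
    (b : Fin m → Ω → ℝ) (hbm : ∀ k, Measurable (b k))
    (hb0 : ∀ k ω, 0 ≤ b k ω) (hb1 : ∀ k ω, b k ω ≤ 1)
    (hind : iIndepFun (fun k ω => 1 - b k ω) μ)
    (r x d t : Fin m → ℝ) (θ : ℝ) (hr : ∀ k, ∫ ω, b k ω ∂μ = r k)
    (ht0 : ∀ k, 0 ≤ t k) (ht : ∀ k, x k * r k - d k = r k * θ + t k)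
    (hsum : ∑ k, t k = θ) :
    θ ≤ ∫ ω, ∑ k, (∏ j ∈ Finset.univ.filter (fun j => j < k), (1 - b j ω)) *
      (x k * b k ω - d k) ∂μ := by
  have hNm : ∀ s : Finset (Fin m), Measurable (fun ω => ∏ j ∈ s, (1 - b j ω)) := fun s =>
    Finset.measurable_prod _ (fun j _ => measurable_const.sub (hbm j))
  have hN0 : ∀ (s : Finset (Fin m)) ω, 0 ≤ ∏ j ∈ s, (1 - b j ω) := fun s ω =>
    Finset.prod_nonneg (fun j _ => by linarith [hb1 j ω])
  have hN1 : ∀ (s : Finset (Fin m)) ω, ∏ j ∈ s, (1 - b j ω) ≤ 1 := fun s ω =>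
    Finset.prod_le_one (fun j _ => by linarith [hb1 j ω]) (fun j _ => by linarith [hb0 j ω])
  have hNi : ∀ s : Finset (Fin m), Integrable (fun ω => ∏ j ∈ s, (1 - b j ω)) μ := fun s =>
    Integrable.of_bound (hNm s).aestronglyMeasurable 1
      (Filter.Eventually.of_forall fun ω => by
        rw [Real.norm_eq_abs, abs_of_nonneg (hN0 s ω)]; exact hN1 s ω)
  have hbi : ∀ k, Integrable (b k) μ := fun k =>
    Integrable.of_bound (hbm k).aestronglyMeasurable 1
      (Filter.Eventually.of_forall fun ω => by
        rw [Real.norm_eq_abs, abs_of_nonneg (hb0 k ω)]; exact hb1 k ω)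
  have hNbi : ∀ (s : Finset (Fin m)) k,
      Integrable (fun ω => (∏ j ∈ s, (1 - b j ω)) * b k ω) μ := fun s k =>
    Integrable.of_bound ((hNm s).mul (hbm k)).aestronglyMeasurable 1
      (Filter.Eventually.of_forall fun ω => by
        rw [Real.norm_eq_abs, abs_of_nonneg (mul_nonneg (hN0 s ω) (hb0 k ω))]
        exact mul_le_one₀ (hN1 s ω) (hb0 k ω) (hb1 k ω))
  have hNb : ∀ (s : Finset (Fin m)) k, k ∉ s →
      ∫ ω, (∏ j ∈ s, (1 - b j ω)) * b k ω ∂μ = (∫ ω, ∏ j ∈ s, (1 - b j ω) ∂μ) * r k := by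
    intro s k hk
    have h1 := hind.indepFun_finsetProd_of_notMem
      (fun j => measurable_const.sub (hbm j)) hk
    have h2 : IndepFun (fun ω => ∏ j ∈ s, (1 - b j ω)) (b k) μ := by
      have h3 := h1.comp measurable_id (measurable_const.sub measurable_id :
        Measurable (fun u : ℝ => 1 - u))
      convert h3 using 1
      · ext ω; simp
      · ext ω; simp
    rw [← hr k]
    exact h2.integral_fun_mul_eq_mul_integral (hNm s).aestronglyMeasurable
      (hbm k).aestronglyMeasurable
  set N : Fin m → ℝ := fun k => ∫ ω, ∏ j ∈ Finset.univ.filter (fun j => j < k), (1 - b j ω) ∂μ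
    with hN
  set q : ℝ := ∫ ω, ∏ j, (1 - b j ω) ∂μ with hq
  have hqN : ∀ k, q ≤ N k := fun k =>
    integral_mono (hNi _) (hNi _) (fun ω => by
      simp only
      rw [← Finset.prod_filter_mul_prod_filter_not Finset.univ (fun j => j < k)]
      exact mul_le_of_le_one_right (hN0 _ ω) (hN1 _ ω))
  have hlt : ∀ k : Fin m, k ∉ Finset.univ.filter (fun j => j < k) := fun k => by simp
  have hq1 : q = 1 - ∑ k, N k * r k := by
    have : ∀ ω, ∏ j, (1 - b j ω) = 1 - ∑ k,
        (∏ j ∈ Finset.univ.filter (fun j => j < k), (1 - b j ω)) * b k ω := fun ω => by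
      rw [Finset.prod_one_sub_ordered]
      simp only [mul_comm]
    rw [hq, integral_congr_ae (Filter.Eventually.of_forall this),
      integral_sub (integrable_const _) (integrable_finsetSum _ fun k _ => hNbi _ k),
      integral_finsetSum _ fun k _ => hNbi _ k]
    simp [hNb _ _ (hlt _), hN]
  have hval : ∫ ω, ∑ k, (∏ j ∈ Finset.univ.filter (fun j => j < k), (1 - b j ω)) *
      (x k * b k ω - d k) ∂μ = ∑ k, N k * (r k * θ + t k) := by
    have e : ∀ k ω, (∏ j ∈ Finset.univ.filter (fun j => j < k), (1 - b j ω)) *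
      (x k * b k ω - d k) =
      x k * ((∏ j ∈ Finset.univ.filter (fun j => j < k), (1 - b j ω)) * b k ω) -
      d k * (∏ j ∈ Finset.univ.filter (fun j => j < k), (1 - b j ω)) := fun k ω => by ring
    simp only [e]
    rw [integral_finsetSum]
    swap
    · exact fun k _ => ((hNbi _ k).const_mul _).sub ((hNi _).const_mul _)
    refine Finset.sum_congr rfl fun k _ => ?_
    rw [integral_sub ((hNbi _ k).const_mul _) ((hNi _).const_mul _), integral_const_mul,
      integral_const_mul, hNb _ _ (hlt k), ← ht k]
    simp only [hN]
    ring
  rw [hval]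
  have h1 : q * θ ≤ ∑ k, N k * t k := by
    rw [← hsum, Finset.mul_sum]
    exact Finset.sum_le_sum fun k _ => mul_le_mul_of_nonneg_right (hqN k) (ht0 k)
  have h2 : ∑ k, N k * (r k * θ + t k) = (∑ k, N k * r k) * θ + ∑ k, N k * t k := by
    rw [Finset.sum_mul, ← Finset.sum_add_distrib]
    exact Finset.sum_congr rfl fun k _ => by ring
  rw [h2]
  have h3 : ∑ k, N k * r k = 1 - q := by linarith
  rw [h3]
  linarith

theorem exists_balanced_threshold {m : ℕ} (p z : Fin m → ℝ) (hp : ∀ i, 0 ≤ p i) :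
    ∃ θ : ℝ, 0 ≤ θ ∧ ∑ i, p i * max (z i - θ) 0 = θ := by
  have hA0 : ∀ θ, 0 ≤ ∑ i, p i * max (z i - θ) 0 := fun θ =>
    Finset.sum_nonneg fun i _ => mul_nonneg (hp i) (le_max_right _ _)
  set B := ∑ i, p i * max (z i - 0) 0 with hB
  have hcont : ContinuousOn (fun θ : ℝ => θ - ∑ i, p i * max (z i - θ) 0) (Set.Icc 0 B) := by
    fun_prop
  have hAB : ∑ i, p i * max (z i - B) 0 ≤ B := by
    conv_rhs => rw [hB]
    have := hA0 0
    exact Finset.sum_le_sum fun i _ => mul_le_mul_of_nonneg_left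
      (max_le_max (by linarith) le_rfl) (hp i)
  have hmem : (0:ℝ) ∈ Set.Icc (0 - ∑ i, p i * max (z i - 0) 0)
      (B - ∑ i, p i * max (z i - B) 0) := by
    constructor
    · linarith [hA0 0]
    · linarith
  obtain ⟨θ, hθ, h⟩ := intermediate_value_Icc (hA0 0) hcont hmem
  exact ⟨θ, hθ.1, by simp only at h; linarith⟩

/-- In the binary model of delegated search (`m` solutions; solution
`i` feasible independently with probability `p i ∈ (0,1]`, yielding known utilities
`x i ≥ 0` to the principal and `y i ≥ 0` to the agent if feasible and `0` otherwise;
testing feasibility costs `c i` with `0 ≤ c i ≤ p i · y i`; priorities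
`z i = x i − c i / p i` and `w i = y i − c i / p i`; prize
`v i = x i · 1{i feasible}` and covered call value `κ i = min (v i) (z i)`),
there is a half-infinite interval `X = (θ,∞)` or `[θ,∞)` with `θ ≥ 0` such that for
every ordering `π` of the solutions by nonincreasing `w`, the delegated process —
the agent tests the solutions `{i : z i ∈ X}` in the order `π`, stopping at the
first feasible one, which the principal adopts — has expected net value at least
`(1/2)·E[max(0, max_i κ_i)]`.  Since `E[max(0, max_i κ_i)]` bounds the expected net
value of any sequential search the principal could perform herself, this mechanism
attains at least half the expected net value of the principal's optimal autonomous
search. -/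
theorem delegated_binary_half {Ω : Type*} [MeasurableSpace Ω]
    (μ : Measure Ω) [IsProbabilityMeasure μ]
    (m : ℕ) (hm : 0 < m)
    (p x y c : Fin m → ℝ)
    (hp : ∀ i, p i ∈ Set.Ioc (0:ℝ) 1)
    (hx : ∀ i, 0 ≤ x i) (hy : ∀ i, 0 ≤ y i)
    (hc : ∀ i, 0 ≤ c i ∧ c i ≤ p i * y i)
    (feas : Fin m → Ω → Bool)
    (hfeas_meas : ∀ i, Measurable (feas i))
    (hfeas_indep : iIndepFun feas μ)
    (hfeas_p : ∀ i, μ {ω | feas i ω = true} = ENNReal.ofReal (p i))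
    (zz ww : Fin m → ℝ)
    (hzz : ∀ i, zz i = x i - c i / p i)
    (hww : ∀ i, ww i = y i - c i / p i) :
    ∃ θ : ℝ, 0 ≤ θ ∧ ∃ X : Set ℝ, (X = Set.Ioi θ ∨ X = Set.Ici θ) ∧
      ∀ π : Equiv.Perm (Fin m),
        (∀ k l : Fin m, k ≤ l → ww (π l) ≤ ww (π k)) →
        (1 / 2) * (∫ ω, max 0 (⨆ i, min (if feas i ω then x i else 0) (zz i)) ∂μ)
          ≤ ∫ ω, delegatedBinaryNet (fun i => feas i ω = true) x zz c π X ∂μ := by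
  obtain ⟨θ, hθ0, hθ⟩ := exists_balanced_threshold p zz (fun i => (hp i).1.le)
  refine ⟨θ, hθ0, Set.Ici θ, Or.inr rfl, fun π _ => ?_⟩
  have hset : ∀ i, MeasurableSet {ω | feas i ω = true} := fun i =>
    hfeas_meas i (measurableSet_singleton true)
  have hF : ∀ i, (fun ω => if feas i ω = true then (1:ℝ) else 0) =
      Set.indicator {ω | feas i ω = true} 1 := fun i => by
    ext ω; simp [Set.indicator_apply]
  have hFint : ∀ i, ∫ ω, (if feas i ω = true then (1:ℝ) else 0) ∂μ = p i := fun i => by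
    rw [hF, integral_indicator_one (hset i), measureReal_def, hfeas_p,
      ENNReal.toReal_ofReal (hp i).1.le]
  have hFi : ∀ i, Integrable (fun ω => if feas i ω = true then (1:ℝ) else 0) μ := fun i => by
    rw [hF]
    exact (integrable_const (1:ℝ)).indicator (hset i)
  -- upper bound on the benchmark
  have hup : ∫ ω, max 0 (⨆ i, min (if feas i ω then x i else 0) (zz i)) ∂μ ≤ 2 * θ := by
    have hint : Integrable (fun ω => θ + ∑ i, max (zz i - θ) 0 *
        (if feas i ω = true then (1:ℝ) else 0)) μ :=
      (integrable_const _).add (integrable_finsetSum _ fun i _ => (hFi i).const_mul _)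
    have h1 : ∫ ω, (θ + ∑ i, max (zz i - θ) 0 *
        (if feas i ω = true then (1:ℝ) else 0)) ∂μ = 2 * θ := by
      rw [integral_add (integrable_const _)
        (integrable_finsetSum _ fun i _ => (hFi i).const_mul _),
        integral_finsetSum _ fun i _ => (hFi i).const_mul _]
      simp only [integral_const_mul, hFint]
      simp only [mul_comm, hθ] at hθ ⊢
      simp only [integral_const]
      simp
      ring
    rw [← h1]
    refine integral_mono_of_nonneg (Filter.Eventually.of_forall fun ω => le_max_left _ _) hint
      (Filter.Eventually.of_forall fun ω => ?_)
    have hnn : ∀ i, 0 ≤ max (zz i - θ) 0 * (if feas i ω = true then (1:ℝ) else 0) := fun i =>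
      mul_nonneg (le_max_right _ _) (by split <;> norm_num)
    have hs : 0 ≤ ∑ i, max (zz i - θ) 0 * (if feas i ω = true then (1:ℝ) else 0) :=
      Finset.sum_nonneg fun i _ => hnn i
    have : Nonempty (Fin m) := ⟨⟨0, hm⟩⟩
    refine max_le (by linarith) (ciSup_le fun i => ?_)
    have hsi := Finset.single_le_sum (fun i _ => hnn i) (Finset.mem_univ i)
    by_cases hf : feas i ω = true
    · refine (min_le_right _ _).trans ?_
      rw [if_pos hf, mul_one] at hsi
      linarith [le_max_left (zz i - θ) 0]
    · refine (min_le_left _ _).trans ?_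
      rw [if_neg hf]
      linarith
  -- lower bound on the mechanism
  have hlow : θ ≤ ∫ ω, delegatedBinaryNet (fun i => feas i ω = true) x zz c π (Set.Ici θ) ∂μ := by
    let g : Fin m → Bool → ℝ := fun k f => if θ ≤ zz (π k) ∧ f = true then 1 else 0
    have hg : ∀ k, Measurable (g k) := fun k => measurable_of_finite _
    have heq : ∀ ω, delegatedBinaryNet (fun i => feas i ω = true) x zz c π (Set.Ici θ) = _ :=
      fun ω => delegatedBinaryNet_eq_sum (fun i => feas i ω) x zz c π θ
        (fun k => g k (feas (π k) ω)) (fun k => if θ ≤ zz (π k) then c (π k) else 0)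
        (fun k => rfl) (fun k => rfl)
    simp only [heq]
    refine delegated_core μ (fun k ω => g k (feas (π k) ω))
      (fun k => (hg k).comp (hfeas_meas _))
      (fun k ω => by dsimp only [g]; split <;> norm_num)
      (fun k ω => by dsimp only [g]; split <;> norm_num) ?_
      (fun k => if θ ≤ zz (π k) then p (π k) else 0) (fun k => x (π k))
      (fun k => if θ ≤ zz (π k) then c (π k) else 0)
      (fun k => p (π k) * max (zz (π k) - θ) 0) θ ?_ ?_ ?_ ?_
    · exact (hfeas_indep.precomp π.injective).comp (fun k f => 1 - g k f)
        (fun k => measurable_of_finite _)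
    · intro k
      by_cases h : θ ≤ zz (π k)
      · simp only [g, h, true_and, if_true]
        exact hFint _
      · simp [g, h]
    · exact fun k => mul_nonneg (hp _).1.le (le_max_right _ _)
    · intro k
      by_cases h : θ ≤ zz (π k)
      · have hne := (hp (π k)).1.ne'
        simp only [h, if_true]
        rw [max_eq_left (by linarith), hzz]
        field_simp
        ring
      · simp only [h, if_false]
        rw [max_eq_right (by linarith)]
        ring
    · rw [← hθ]
      conv_rhs => rw [hθ]
      rw [Equiv.sum_comp π (fun i => p i * max (zz i - ∑ i, p i * max (zz i - θ) 0) 0), hθ, hθ]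
  linarith
end

section
/- Suppose the principal's and agent's utilities are independent: the agent draws n i.i.d. samples (x_1,y_1),…,(x_n,y_n) where x_i and y_i are independent, x_i has continuous (atomless) cumulative distribution function F, and the y_i are drawn from an arbitrary atomless distribution. Let θ satisfy F(θ) = exp(−1/n). Then the single-proposal mechanism with eligible set {(x,y) : x > θ}, under which the agent proposes the eligible sample with maximum y-value (proposing nothing if no sample is eligible), guarantees the principal expected utility at least (1 − 1/e)·E[max_{1≤i≤n} x_i]. -/
open MeasureTheory ProbabilityTheory

lemma indep_assoc {Ω α β γ : Type*} [MeasurableSpace Ω] [MeasurableSpace α] [MeasurableSpace β]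
    [MeasurableSpace γ] (μ : Measure Ω) [IsProbabilityMeasure μ]
    (X : Ω → α) (Y : Ω → β) (Z : Ω → γ) (hX : Measurable X) (hY : Measurable Y)
    (hZ : Measurable Z) (h1 : IndepFun X Y μ) (h2 : IndepFun (fun ω => (X ω, Y ω)) Z μ) :
    IndepFun X (fun ω => (Y ω, Z ω)) μ := by
  have := Measure.isProbabilityMeasure_map (μ := μ) hX.aemeasurable
  have := Measure.isProbabilityMeasure_map (μ := μ) hY.aemeasurable
  have := Measure.isProbabilityMeasure_map (μ := μ) hZ.aemeasurable
  have h3 : IndepFun Y Z μ := h2.comp measurable_snd measurable_id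
  rw [indepFun_iff_map_prod_eq_prod_map_map (by fun_prop) (by fun_prop)] at *
  rw [h3]
  rw [h1] at h2
  have h4 := (measurePreserving_prodAssoc (μ.map X) (μ.map Y) (μ.map Z)).map_eq
  rw [← h4, ← h2, Measure.map_map (by fun_prop) (by fun_prop)]
  rfl

lemma tie_null {Ω : Type*} [MeasurableSpace Ω] (μ : Measure Ω) [IsProbabilityMeasure μ]
    (X Y : Ω → ℝ) (hX : Measurable X) (hY : Measurable Y) (h : IndepFun X Y μ)
    (ha : ∀ c, μ {ω | Y ω = c} = 0) : μ {ω | X ω = Y ω} = 0 := by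
  have := Measure.isProbabilityMeasure_map (μ := μ) hX.aemeasurable
  have := Measure.isProbabilityMeasure_map (μ := μ) hY.aemeasurable
  have hD : MeasurableSet {p : ℝ × ℝ | p.1 = p.2} :=
    measurableSet_eq_fun measurable_fst measurable_snd
  have e : μ {ω | X ω = Y ω} = μ.map (fun ω => (X ω, Y ω)) {p : ℝ × ℝ | p.1 = p.2} := by
    rw [Measure.map_apply (by fun_prop) hD]; rfl
  rw [indepFun_iff_map_prod_eq_prod_map_map (by fun_prop) (by fun_prop)] at h
  rw [e, h, Measure.measure_prod_null hD]
  refine Filter.Eventually.of_forall fun x => ?_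
  have : Prod.mk x ⁻¹' {p : ℝ × ℝ | p.1 = p.2} = {x} := by
    ext y; simp [eq_comm]
  show μ.map Y (Prod.mk x ⁻¹' {p : ℝ × ℝ | p.1 = p.2}) = 0
  rw [this, Measure.map_apply hY (measurableSet_singleton x)]
  exact ha x

/-- Suppose the principal's and agent's utilities are independent:
the agent draws `n` i.i.d. samples `(x_1,y_1),…,(x_n,y_n)` from a distribution on
`[0,∞)×[0,∞)` where `x_i` and `y_i` are independent, `x_i` has continuous (atomless)
cumulative distribution function `F`, and the `y_i` are drawn from an arbitrary
atomless distribution; assume `E[max_i x_i]` is finite.  Let `θ` satisfy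
`F(θ) = exp(−1/n)`.  Then the single-proposal mechanism with eligible set
`{(x,y) : x > θ}`, under which the agent proposes the eligible sample with maximum
`y`-value (proposing nothing when no sample is eligible), guarantees the principal
expected utility at least `(1 − 1/e)·E[max_i x_i]`. -/
theorem delegation_one_minus_inv_e {Ω : Type*} [MeasurableSpace Ω]
    (μ : Measure Ω) [IsProbabilityMeasure μ]
    (n : ℕ) (hn : 0 < n) (s : Fin n → Ω → ℝ × ℝ)
    (hmeas : ∀ i, Measurable (s i))
    (hnonneg : ∀ i ω, 0 ≤ (s i ω).1 ∧ 0 ≤ (s i ω).2)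
    (hindep : iIndepFun s μ)
    (hident : ∀ i, μ.map (s i) = μ.map (s ⟨0, hn⟩))
    (hxy_indep : ∀ i, IndepFun (fun ω => (s i ω).1) (fun ω => (s i ω).2) μ)
    (hy_atomless : ∀ i (c : ℝ), μ {ω | (s i ω).2 = c} = 0)
    (hint_max : Integrable (fun ω => ⨆ i, (s i ω).1) μ)
    (F : ℝ → ℝ) (hF : ∀ t, F t = (μ {ω | (s ⟨0, hn⟩ ω).1 ≤ t}).toReal)
    (hFcont : Continuous F)
    (θ : ℝ) (hθ : F θ = Real.exp (-1 / n)) :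
    ∀ proposal : Ω → Option (Fin n),
      (∀ ω i, proposal ω = some i →
        θ < (s i ω).1 ∧ ∀ j, θ < (s j ω).1 → (s j ω).2 ≤ (s i ω).2) →
      (∀ ω, (∃ i, θ < (s i ω).1) → (proposal ω).isSome) →
      Integrable (fun ω => ((proposal ω).map fun i => (s i ω).1).getD 0) μ →
      (1 - 1 / Real.exp 1) * (∫ ω, (⨆ i, (s i ω).1) ∂μ)
        ≤ ∫ ω, ((proposal ω).map fun i => (s i ω).1).getD 0 ∂μ := by
  intro P hP1 hP2 hPint
  classical
  set X : Fin n → Ω → ℝ := fun i ω => (s i ω).1 with hXdef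
  set Y : Fin n → Ω → ℝ := fun i ω => (s i ω).2 with hYdef
  have hX : ∀ i, Measurable (X i) := fun i => (hmeas i).fst
  have hY : ∀ i, Measurable (Y i) := fun i => (hmeas i).snd
  have hX0 : ∀ i ω, 0 ≤ X i ω := fun i ω => (hnonneg i ω).1
  have hXint : ∀ i, Integrable (X i) μ := by
    intro i
    refine hint_max.mono' (hX i).aestronglyMeasurable (Filter.Eventually.of_forall fun ω => ?_)
    rw [Real.norm_of_nonneg (hX0 i ω)]
    exact le_ciSup (f := fun i => X i ω) (Set.finite_range _).bddAbove i
  set i0 : Fin n := ⟨0, hn⟩ with hi0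
  have hid : ∀ i, IdentDistrib (X i) (X i0) μ μ := by
    intro i
    have h : IdentDistrib (s i) (s i0) μ μ :=
      ⟨(hmeas i).aemeasurable, (hmeas i0).aemeasurable, hident i⟩
    exact h.comp measurable_fst
  -- one-dimensional quantities
  set p : ℝ := 1 - Real.exp (-1 / n) with hp
  have hn' : (0 : ℝ) < n := by exact_mod_cast hn
  have hp0 : 0 < p := by
    have : Real.exp (-1 / n) < 1 := by
      rw [Real.exp_lt_one_iff]
      exact div_neg_of_neg_of_pos (by norm_num) hn'
    linarith
  have hpn : n * p ≤ 1 := by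
    have := Real.add_one_le_exp (-1 / (n : ℝ))
    have h2 : p ≤ 1 / n := by
      have e : (-1 : ℝ) / n = - (1 / n) := by ring
      rw [hp]; linarith
    calc n * p ≤ n * (1 / n) := by gcongr
      _ = 1 := by field_simp
  have hle : ∀ i, μ.real {ω | X i ω ≤ θ} = Real.exp (-1 / n) := by
    intro i
    rw [← hθ, hF]
    exact congrArg ENNReal.toReal ((hid i).measure_mem_eq (measurableSet_Iic (a := θ)))
  have hgt : ∀ i, μ.real {ω | θ < X i ω} = p := by
    intro i
    have h := probReal_compl_eq_one_sub (μ := μ) (s := {ω | X i ω ≤ θ})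
      (measurableSet_le (hX i) measurable_const)
    rw [hle i] at h
    rw [hp, ← h]
    congr 1
    ext ω; simp
  set φ : ℝ → ℝ := (Set.Ioi θ).indicator id with hφ
  have hφm : Measurable φ := measurable_id.indicator measurableSet_Ioi
  set M : ℝ := ∫ ω, φ (X i0 ω) ∂μ with hM
  have hφX : ∀ i, (fun ω => φ (X i ω)) = {ω | θ < X i ω}.indicator (X i) := by
    intro i; ext ω; simp [hφ, Set.indicator]
  have hgm : ∀ i, MeasurableSet {ω | θ < X i ω} := fun i => measurableSet_lt measurable_const (hX i)
  have hφint : ∀ i, Integrable (fun ω => φ (X i ω)) μ := by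
    intro i; rw [hφX]; exact (hXint i).indicator (hgm i)
  have hMi : ∀ i, ∫ ω, φ (X i ω) ∂μ = M := fun i => ((hid i).comp hφm).integral_eq
  have hM0 : 0 ≤ M := by
    refine integral_nonneg fun ω => ?_
    have := congrFun (hφX i0) ω
    show 0 ≤ φ (X i0 ω)
    rw [this]
    exact Set.indicator_nonneg (fun ω _ => hX0 i0 ω) ω
  -- upper bound on the benchmark
  have hub : p * (∫ ω, (⨆ i, X i ω) ∂μ) ≤ M := by
    have hψint : ∀ i, Integrable (fun ω => φ (X i ω) - {ω | θ < X i ω}.indicator (fun _ => θ) ω) μ :=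
      fun i => (hφint i).sub ((integrable_const θ).indicator (hgm i))
    have hψ : ∀ i, ∫ ω, (φ (X i ω) - {ω | θ < X i ω}.indicator (fun _ => θ) ω) ∂μ = M - p * θ := by
      intro i
      rw [integral_sub (hφint i) ((integrable_const θ).indicator (hgm i)), hMi,
        integral_indicator_const _ (hgm i), hgt, smul_eq_mul]
    have hψ' : ∀ i ω, φ (X i ω) - {ω | θ < X i ω}.indicator (fun _ => θ) ω = max (X i ω - θ) 0 := by
      intro i ω
      by_cases h : θ < X i ω
      · simp [hφ, Set.indicator, h, h.le]
      · simp [hφ, Set.indicator, h, not_lt.mp h]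
    have hD : 0 ≤ M - p * θ := by
      rw [← hψ i0]
      exact integral_nonneg fun ω => by rw [hψ']; exact le_max_right _ _
    have h1 : ∫ ω, (⨆ i, X i ω) ∂μ ≤ ∫ ω, (θ + ∑ i, (φ (X i ω) - {ω | θ < X i ω}.indicator (fun _ => θ) ω)) ∂μ := by
      refine integral_mono hint_max
        ((integrable_const θ).add (integrable_finsetSum _ fun i _ => hψint i)) fun ω => ?_
      have : Nonempty (Fin n) := ⟨i0⟩
      refine ciSup_le fun i => ?_
      simp only [hψ']
      have := Finset.single_le_sum (f := fun i => max (X i ω - θ) 0)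
        (fun j _ => le_max_right _ _) (Finset.mem_univ i)
      have h3 := le_max_left (X i ω - θ) 0
      linarith
    rw [integral_add (integrable_const θ) (integrable_finsetSum _ fun i _ => hψint i),
      integral_finsetSum _ fun i _ => hψint i] at h1
    simp only [hψ] at h1
    simp at h1
    rw [← mul_sub] at h1
    have h4 : p * (∫ ω, (⨆ i, X i ω) ∂μ) ≤ p * (θ + n * (M - p * θ)) := by gcongr
    nlinarith
  -- the winning events
  set G : Fin n → Set Ω := fun i => {ω | ∀ j, j ≠ i → θ < X j ω → Y j ω < Y i ω} with hG
  have key : ∀ i, MeasurableSet (G i) ∧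
      IndepFun (X i) ((G i).indicator (fun _ => (1 : ℝ))) μ := by
    intro i
    let S : Finset (Fin n) := Finset.univ.erase i
    have hdisj : Disjoint ({i} : Finset (Fin n)) S := by simp [S]
    have h1 := hindep.indepFun_finset {i} S hdisj hmeas
    have h2 : IndepFun (s i) (fun ω (j : S) => s j ω) μ :=
      h1.comp (φ := fun f : (({i} : Finset (Fin n)) → ℝ × ℝ) => f ⟨i, by simp⟩)
        (ψ := id) (measurable_pi_apply _) measurable_id
    have h3 := indep_assoc μ (X i) (Y i) (fun ω (j : S) => s j ω) (hX i) (hY i)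
      (measurable_pi_lambda _ fun j => hmeas j) (hxy_indep i) h2
    let T : Set (ℝ × (S → ℝ × ℝ)) := {q | ∀ j : S, θ < (q.2 j).1 → (q.2 j).2 < q.1}
    have hT : MeasurableSet T := by
      have : T = ⋂ j : S, ({q | θ < (q.2 j).1}ᶜ ∪ {q | (q.2 j).2 < q.1}) := by
        ext q; simp [T, imp_iff_not_or]
      rw [this]
      refine MeasurableSet.iInter fun j => MeasurableSet.union (MeasurableSet.compl ?_) ?_
      · exact measurableSet_lt measurable_const (by fun_prop)
      · exact measurableSet_lt (by fun_prop) (by fun_prop)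
    have hGT : G i = (fun ω => (Y i ω, fun j : S => s j ω)) ⁻¹' T := by
      ext ω; simp [G, T, S, hXdef, hYdef]
    constructor
    · rw [hGT]
      have hm : Measurable (fun ω => (Y i ω, fun j : S => s j ω)) :=
        (hY i).prodMk (measurable_pi_lambda _ fun j => hmeas j)
      exact hm hT
    · have hTm : Measurable (T.indicator (fun _ => (1 : ℝ))) := measurable_const.indicator hT
      have := h3.comp (φ := id) measurable_id hTm
      rw [hGT]
      exact this
  have hfac : ∀ i (f : ℝ → ℝ), Measurable f →
      ∫ ω, (f (X i ω) * (G i).indicator (fun _ => (1 : ℝ)) ω) ∂μ =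
        (∫ ω, f (X i ω) ∂μ) * μ.real (G i) := by
    intro i f hf
    have h := (key i).2.comp hf measurable_id
    have := h.integral_fun_mul_eq_mul_integral (hf.comp (hX i)).aestronglyMeasurable
      (measurable_const.indicator (key i).1).aestronglyMeasurable
    simp only [Function.comp_apply, id] at this
    rw [this, integral_indicator_const _ (key i).1]
    simp
  have hfacE : ∀ i, μ.real ({ω | θ < X i ω} ∩ G i) = p * μ.real (G i) := by
    intro i
    have h := hfac i ((Set.Ioi θ).indicator (fun _ => 1)) (measurable_const.indicator measurableSet_Ioi)
    have e1 : ∀ ω, (Set.Ioi θ).indicator (fun _ => (1:ℝ)) (X i ω) = {ω | θ < X i ω}.indicator (fun _ => (1:ℝ)) ω := by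
      intro ω; simp [Set.indicator]
    have e2 : ∀ ω, {ω | θ < X i ω}.indicator (fun _ => (1:ℝ)) ω * (G i).indicator (fun _ => (1:ℝ)) ω
        = ({ω | θ < X i ω} ∩ G i).indicator (fun _ => (1:ℝ)) ω := by
      intro ω
      by_cases h1 : θ < X i ω <;> by_cases h2 : ω ∈ G i <;> simp [h1, h2]
    simp only [e1, e2] at h
    rw [integral_indicator_const _ (hgm i), integral_indicator_const _ ((hgm i).inter (key i).1), hgt] at h
    simpa using h
  -- total winning probability
  have hnone : μ.real (⋂ i, {ω | X i ω ≤ θ}) = 1 / Real.exp 1 := by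
    have h := hindep.measure_inter_preimage_eq_mul (S := Finset.univ)
      (sets := fun _ => {q : ℝ × ℝ | q.1 ≤ θ})
      (fun i _ => measurableSet_le measurable_fst measurable_const)
    have h' := congrArg ENNReal.toReal h
    rw [ENNReal.toReal_prod] at h'
    have e : (⋂ i, {ω | X i ω ≤ θ}) = ⋂ i ∈ (Finset.univ : Finset (Fin n)), s i ⁻¹' {q : ℝ × ℝ | q.1 ≤ θ} := by
      ext ω; simp [hXdef]
    rw [e]
    refine h'.trans ?_
    have : ∀ i ∈ (Finset.univ : Finset (Fin n)), (μ (s i ⁻¹' {q : ℝ × ℝ | q.1 ≤ θ})).toReal = Real.exp (-1 / n) :=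
      fun i _ => hle i
    rw [Finset.prod_congr rfl this, Finset.prod_const, Finset.card_univ, Fintype.card_fin,
      ← Real.exp_nat_mul, one_div, ← Real.exp_neg]
    congr 1
    field_simp
  have hties : ∀ᵐ ω ∂μ, ∀ i j, i ≠ j → Y i ω ≠ Y j ω := by
    rw [ae_all_iff]; intro i
    rw [ae_all_iff]; intro j
    by_cases hij : i = j
    · simp [hij]
    · have h := tie_null μ (Y i) (Y j) (hY i) (hY j)
        ((hindep.indepFun hij).comp measurable_snd measurable_snd) (hy_atomless j)
      have : ∀ᵐ ω ∂μ, ¬ (Y i ω = Y j ω) := by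
        rw [ae_iff]; simpa using h
      filter_upwards [this] with ω hω _ using hω
  have hsum : 1 - 1 / Real.exp 1 ≤ p * ∑ i, μ.real (G i) := by
    rw [Finset.mul_sum]
    simp only [← hfacE]
    refine le_trans ?_ (measureReal_iUnion_fintype_le _)
    rw [← hnone, ← probReal_compl_eq_one_sub
      (MeasurableSet.iInter fun i => measurableSet_le (hX i) measurable_const)]
    refine ENNReal.toReal_mono (measure_ne_top _ _) (measure_mono_ae ?_)
    filter_upwards [hties] with ω hω hmem
    have hmem' : ∃ i, θ < X i ω := by
      have : ω ∈ (⋂ i, {ω | X i ω ≤ θ})ᶜ := hmem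
      simpa using this
    obtain ⟨i, hi⟩ := Option.isSome_iff_exists.mp (hP2 ω hmem')
    obtain ⟨h1, h2⟩ := hP1 ω i hi
    have : ω ∈ ⋃ i, ({ω | θ < X i ω} ∩ G i) :=
      Set.mem_iUnion.mpr ⟨i, h1, fun j hj hjθ => lt_of_le_of_ne (h2 j hjθ) (hω j i hj)⟩
    exact this
  -- lower bound on the mechanism
  have hlb : (∑ i, μ.real (G i)) * M ≤ ∫ ω, ((P ω).map fun i => X i ω).getD 0 ∂μ := by
    have hint : ∀ i, Integrable (fun ω => φ (X i ω) * (G i).indicator (fun _ => (1 : ℝ)) ω) μ := by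
      intro i
      have : (fun ω => φ (X i ω) * (G i).indicator (fun _ => (1 : ℝ)) ω) = (G i).indicator (fun ω => φ (X i ω)) := by
        ext ω; simp [Set.indicator]
      rw [this]
      exact (hφint i).indicator (key i).1
    have e : (∑ i, μ.real (G i)) * M = ∫ ω, ∑ i, φ (X i ω) * (G i).indicator (fun _ => (1 : ℝ)) ω ∂μ := by
      rw [integral_finsetSum _ fun i _ => hint i, Finset.sum_mul]
      refine Finset.sum_congr rfl fun i _ => ?_
      rw [hfac i φ hφm, hMi, mul_comm]
    rw [e]
    refine integral_mono (integrable_finsetSum _ fun i _ => hint i) hPint fun ω => ?_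
    have hv : ((P ω).map fun i => X i ω).getD 0 = ∑ i, if P ω = some i then X i ω else 0 := by
      cases h : P ω with
      | none => simp
      | some k => simp
    have : ∑ i, φ (X i ω) * (G i).indicator (fun _ => (1 : ℝ)) ω ≤ ∑ i, if P ω = some i then X i ω else 0 := by
      refine Finset.sum_le_sum fun i _ => ?_
      have hnn : 0 ≤ if P ω = some i then X i ω else 0 := by
        split_ifs
        · exact hX0 i ω
        · exact le_rfl
      by_cases h1 : θ < X i ω
      · by_cases h2 : ω ∈ G i
        · obtain ⟨k, hk⟩ := Option.isSome_iff_exists.mp (hP2 ω ⟨i, h1⟩)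
          obtain ⟨h3, h4⟩ := hP1 ω k hk
          have hki : k = i := by
            by_contra hne
            exact absurd (h4 i h1) (not_le.mpr (h2 k hne h3))
          subst hki
          simp [hk, hφ, h1, h2]
        · simpa [h2] using hnn
      · simpa [hφ, h1] using hnn
    exact this.trans hv.symm.le
  refine le_trans ?_ hlb
  have hS0 : 0 ≤ ∑ i, μ.real (G i) := Finset.sum_nonneg fun i _ => measureReal_nonneg
  have hmax0 : 0 ≤ ∫ ω, (⨆ i, X i ω) ∂μ :=
    integral_nonneg fun ω => Real.iSup_nonneg fun i => hX0 i ω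
  calc (1 - 1 / Real.exp 1) * (∫ ω, (⨆ i, X i ω) ∂μ)
      ≤ (p * ∑ i, μ.real (G i)) * (∫ ω, (⨆ i, X i ω) ∂μ) := by gcongr
    _ = (∑ i, μ.real (G i)) * (p * (∫ ω, (⨆ i, X i ω) ∂μ)) := by ring
    _ ≤ (∑ i, μ.real (G i)) * M := by gcongr
end
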